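/- arXiv:1204.1856 — 2 statements merged into one kernel-verified Lean document; each statement's English description precedes it below -/
import Mathlib

section
/- Under (H1) and (H2), for every partition Δ of [0,T] the function P^Δ from the characterization of the equilibrium of Problem (LQ^Δ) satisfies 0 ≤ P^Δ(t) ≤ P̄₀^Δ(t) for all t ∈ [0,T], where P̄₀^Δ:[0,T]→𝒮ⁿ is the unique solution of the Lyapunov equation Ṗ(s)+P(s)A^Δ(s)+A^Δ(s)ᵀP(s)+Q^Δ(s)=0 on (0,T) with terminal condition P(T)=G(t_{N−1}). Consequently there exists a constant K>0, depending only on T and on sup-norms of A, Q and G (and in particular independent of the partition Δ), such that ‖P^Δ(t)‖ ≤ K for all t ∈ [0,T] and all partitions Δ. -/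
open Set Matrix MeasureTheory

attribute [local instance] Matrix.normedAddCommGroup Matrix.normedSpace

/-- `tp` enumerates a partition `Δ : 0 = t₀ < t₁ < ⋯ < t_N = T` of `[0,T]`. -/
def IsPartition (T : ℝ) (N : ℕ) (tp : ℕ → ℝ) : Prop :=
  0 < N ∧ tp 0 = 0 ∧ tp N = T ∧ ∀ k < N, tp k < tp (k + 1)

/-- `AΔ, BΔ, QΔ, RΔ` are the piecewise frozen coefficients of `A, B, Q, R`
associated with the partition `tp` (freezing the first variable at `t_{k-1}`). -/
def IsFrozen (n m : ℕ) (N : ℕ) (tp : ℕ → ℝ)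
    (A : ℝ → ℝ → Matrix (Fin n) (Fin n) ℝ) (B : ℝ → ℝ → Matrix (Fin n) (Fin m) ℝ)
    (Q : ℝ → ℝ → Matrix (Fin n) (Fin n) ℝ) (R : ℝ → ℝ → Matrix (Fin m) (Fin m) ℝ)
    (AΔ : ℝ → Matrix (Fin n) (Fin n) ℝ) (BΔ : ℝ → Matrix (Fin n) (Fin m) ℝ)
    (QΔ : ℝ → Matrix (Fin n) (Fin n) ℝ) (RΔ : ℝ → Matrix (Fin m) (Fin m) ℝ) : Prop :=
  ∀ k < N, ∀ s ∈ Ico (tp k) (tp (k + 1)),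
    AΔ s = A (tp k) s ∧ BΔ s = B (tp k) s ∧ QΔ s = Q (tp k) s ∧ RΔ s = R (tp k) s

/-- `PΔ` (together with the closed-loop fundamental solutions `Φ k = Φ^Δ(·;t_k)`)
is the piecewise Riccati function characterizing the equilibrium of Problem (LQ^Δ):
it is right-continuous on each `[t_{k-1},t_k)` and solves the Riccati ODE on each
`(t_{k-1},t_k)`, with `P^Δ(T) = G(t_{N-1})` and left limits at each node `t_k`
(`1 ≤ k ≤ N`) given by
`P^Δ(t_k−0) = Φ^Δ(T;t_k)ᵀG(t_{k−1})Φ^Δ(T;t_k) + ∫_{t_k}^T [Φ^ΔᵀQ(t_{k−1},·)Φ^Δ + Ψ^ΔᵀR(t_{k−1},·)Ψ^Δ]`,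
where `Φ^Δ(·;t_k)` solves `∂_sΦ = [A^Δ − B^Δ(R^Δ)⁻¹(B^Δ)ᵀP^Δ]Φ`, `Φ(t_k;t_k) = I`
(in Volterra integral form) and `Ψ^Δ(s;t_k) = −R^Δ(s)⁻¹B^Δ(s)ᵀP^Δ(s)Φ^Δ(s;t_k)`. -/
noncomputable def IsPiecewiseRiccati (n m : ℕ) (N : ℕ) (T : ℝ) (tp : ℕ → ℝ)
    (Q : ℝ → ℝ → Matrix (Fin n) (Fin n) ℝ) (R : ℝ → ℝ → Matrix (Fin m) (Fin m) ℝ)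
    (G : ℝ → Matrix (Fin n) (Fin n) ℝ)
    (AΔ : ℝ → Matrix (Fin n) (Fin n) ℝ) (BΔ : ℝ → Matrix (Fin n) (Fin m) ℝ)
    (QΔ : ℝ → Matrix (Fin n) (Fin n) ℝ) (RΔ : ℝ → Matrix (Fin m) (Fin m) ℝ)
    (PΔ : ℝ → Matrix (Fin n) (Fin n) ℝ) (Φ : ℕ → ℝ → Matrix (Fin n) (Fin n) ℝ) :
    Prop :=
  (∀ k < N, ContinuousOn PΔ (Ico (tp k) (tp (k + 1)))) ∧
  PΔ T = G (tp (N - 1)) ∧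
  (∀ k < N, ∀ s ∈ Ioo (tp k) (tp (k + 1)),
    HasDerivAt PΔ
      (-(PΔ s * AΔ s + (AΔ s)ᵀ * PΔ s + QΔ s
          - PΔ s * BΔ s * (RΔ s)⁻¹ * (BΔ s)ᵀ * PΔ s)) s) ∧
  (∀ k ≤ N, ∀ s ∈ Icc (tp k) T,
    Φ k s = 1 + ∫ r in (tp k)..s,
      (AΔ r - BΔ r * (RΔ r)⁻¹ * (BΔ r)ᵀ * PΔ r) * Φ k r) ∧
  (∀ k, 1 ≤ k → k ≤ N →
    Filter.Tendsto PΔ (nhdsWithin (tp k) (Iio (tp k))) (nhds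
      ((Φ k T)ᵀ * G (tp (k - 1)) * Φ k T
        + ∫ s in (tp k)..T,
            ((Φ k s)ᵀ * Q (tp (k - 1)) s * Φ k s
              + ((RΔ s)⁻¹ * (BΔ s)ᵀ * PΔ s * Φ k s)ᵀ * R (tp (k - 1)) s
                  * ((RΔ s)⁻¹ * (BΔ s)ᵀ * PΔ s * Φ k s)))))

namespace FrozenLQ

open Filter Topology

section MatrixCalculus

variable {l m n : ℕ}

lemma tendsto_matrix_mul {X : Type*} {F : Filter X} {f : X → Matrix (Fin l) (Fin m) ℝ}
    {g : X → Matrix (Fin m) (Fin n) ℝ} {a : Matrix (Fin l) (Fin m) ℝ}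
    {b : Matrix (Fin m) (Fin n) ℝ} (hf : Tendsto f F (𝓝 a)) (hg : Tendsto g F (𝓝 b)) :
    Tendsto (fun x => f x * g x) F (𝓝 (a * b)) :=
  ((continuous_fst.matrix_mul continuous_snd).tendsto (a, b)).comp (hf.prodMk_nhds hg)

lemma tendsto_matrix_transpose {X : Type*} {F : Filter X} {f : X → Matrix (Fin l) (Fin m) ℝ}
    {a : Matrix (Fin l) (Fin m) ℝ} (hf : Tendsto f F (𝓝 a)) :
    Tendsto (fun x => (f x)ᵀ) F (𝓝 aᵀ) :=
  (continuous_id.matrix_transpose.tendsto a).comp hf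

lemma continuousOn_matrix_mul {X : Type*} [TopologicalSpace X] {s : Set X}
    {f : X → Matrix (Fin l) (Fin m) ℝ} {g : X → Matrix (Fin m) (Fin n) ℝ}
    (hf : ContinuousOn f s) (hg : ContinuousOn g s) :
    ContinuousOn (fun x => f x * g x) s :=
  fun x hx => tendsto_matrix_mul (hf x hx) (hg x hx)

lemma continuousOn_matrix_transpose {X : Type*} [TopologicalSpace X] {s : Set X}
    {f : X → Matrix (Fin l) (Fin m) ℝ} (hf : ContinuousOn f s) :
    ContinuousOn (fun x => (f x)ᵀ) s :=
  fun x hx => tendsto_matrix_transpose (hf x hx)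

lemma norm_matrix_mul_le (a : Matrix (Fin l) (Fin m) ℝ) (b : Matrix (Fin m) (Fin n) ℝ) :
    ‖a * b‖ ≤ m * ‖a‖ * ‖b‖ := by
  refine (Matrix.norm_le_iff (by positivity)).2 fun i j => ?_
  calc ‖(a * b) i j‖ ≤ ∑ k, ‖a i k * b k j‖ := by
        rw [Matrix.mul_apply]; exact norm_sum_le _ _
    _ ≤ ∑ _k : Fin m, ‖a‖ * ‖b‖ := by
        refine Finset.sum_le_sum fun k _ => ?_
        rw [norm_mul]
        exact mul_le_mul (Matrix.norm_entry_le_entrywise_sup_norm a)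
          (Matrix.norm_entry_le_entrywise_sup_norm b) (norm_nonneg _) (norm_nonneg _)
    _ = m * ‖a‖ * ‖b‖ := by simp [mul_assoc]

lemma hasDerivWithinAt_matrix {f : ℝ → Matrix (Fin l) (Fin m) ℝ}
    {f' : Matrix (Fin l) (Fin m) ℝ} {s : Set ℝ} {x : ℝ} :
    HasDerivWithinAt f f' s x ↔ ∀ i j, HasDerivWithinAt (fun t => f t i j) (f' i j) s x := by
  refine Iff.trans (hasDerivWithinAt_pi (φ := f) (φ' := f')) ?_
  exact forall_congr' fun i => hasDerivWithinAt_pi (φ := fun t => f t i)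

lemma hasDerivWithinAt_matrix_mul {f : ℝ → Matrix (Fin l) (Fin m) ℝ}
    {g : ℝ → Matrix (Fin m) (Fin n) ℝ} {f' : Matrix (Fin l) (Fin m) ℝ}
    {g' : Matrix (Fin m) (Fin n) ℝ} {s : Set ℝ} {x : ℝ} (hf : HasDerivWithinAt f f' s x)
    (hg : HasDerivWithinAt g g' s x) :
    HasDerivWithinAt (fun t => f t * g t) (f' * g x + f x * g') s x := by
  refine hasDerivWithinAt_matrix.2 fun i j => ?_
  simp only [Matrix.mul_apply, Matrix.add_apply, ← Finset.sum_add_distrib]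
  exact HasDerivWithinAt.fun_sum fun k _ =>
    (hasDerivWithinAt_matrix.1 hf i k).mul (hasDerivWithinAt_matrix.1 hg k j)

lemma hasDerivWithinAt_matrix_transpose {f : ℝ → Matrix (Fin l) (Fin m) ℝ}
    {f' : Matrix (Fin l) (Fin m) ℝ} {s : Set ℝ} {x : ℝ} (hf : HasDerivWithinAt f f' s x) :
    HasDerivWithinAt (fun t => (f t)ᵀ) f'ᵀ s x :=
  hasDerivWithinAt_matrix.2 fun i j => hasDerivWithinAt_matrix.1 hf j i

lemma hasDerivAt_matrix_transpose {f : ℝ → Matrix (Fin l) (Fin m) ℝ}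
    {f' : Matrix (Fin l) (Fin m) ℝ} {x : ℝ} (hf : HasDerivAt f f' x) :
    HasDerivAt (fun t => (f t)ᵀ) f'ᵀ x :=
  hasDerivWithinAt_univ.1 (hasDerivWithinAt_matrix_transpose (hasDerivWithinAt_univ.2 hf))

/-- The quadratic form of `a` at `x`, as a continuous linear function of `a`. -/
noncomputable def quadForm (x : Fin n → ℝ) : Matrix (Fin n) (Fin n) ℝ →L[ℝ] ℝ :=
  LinearMap.toContinuousLinearMap
    { toFun := fun a => x ⬝ᵥ (a *ᵥ x)
      map_add' := fun a b => by rw [Matrix.add_mulVec, dotProduct_add]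
      map_smul' := fun c a => by rw [Matrix.smul_mulVec, dotProduct_smul]; rfl }

lemma quadForm_apply (x : Fin n → ℝ) (a : Matrix (Fin n) (Fin n) ℝ) :
    quadForm x a = x ⬝ᵥ (a *ᵥ x) := rfl

lemma posSemidef_iff_quadForm {a : Matrix (Fin n) (Fin n) ℝ} :
    a.PosSemidef ↔ aᵀ = a ∧ ∀ x, 0 ≤ quadForm x a := by
  rw [Matrix.posSemidef_iff_dotProduct_mulVec, Matrix.IsHermitian,
    Matrix.conjTranspose_eq_transpose_of_trivial]
  simp [quadForm_apply]

lemma quadForm_mul_eq (x : Fin n → ℝ) (a : Matrix (Fin n) (Fin n) ℝ)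
    (c : Matrix (Fin n) (Fin n) ℝ) :
    quadForm x (aᵀ * c) = (a *ᵥ x) ⬝ᵥ (c *ᵥ x) := by
  rw [quadForm_apply, ← Matrix.mulVec_mulVec, Matrix.dotProduct_mulVec, Matrix.vecMul_transpose]

lemma quadForm_transpose (x : Fin n → ℝ) (a : Matrix (Fin n) (Fin n) ℝ) :
    quadForm x aᵀ = quadForm x a := by
  rw [quadForm_apply, quadForm_apply, Matrix.mulVec_transpose, dotProduct_comm,
    Matrix.dotProduct_mulVec]

lemma abs_quadForm_le (x : Fin n → ℝ) (a : Matrix (Fin n) (Fin n) ℝ) :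
    |quadForm x a| ≤ n * ‖a‖ * (x ⬝ᵥ x) := by
  have h1 : quadForm x a = ∑ i, ∑ j, x i * (a i j * x j) := by
    simp [quadForm_apply, dotProduct, Matrix.mulVec, Finset.mul_sum]
  have h2 : ∀ i j, |x i * (a i j * x j)| ≤ ‖a‖ * ((x i * x i + x j * x j) / 2) := by
    intro i j
    have h3 : |x i * (a i j * x j)| = |a i j| * (|x i| * |x j|) := by
      rw [abs_mul, abs_mul]; ring
    rw [h3]
    refine mul_le_mul (Matrix.norm_entry_le_entrywise_sup_norm a) ?_ (by positivity)
      (norm_nonneg _)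
    nlinarith [sq_nonneg (|x i| - |x j|), abs_mul_abs_self (x i), abs_mul_abs_self (x j)]
  calc |quadForm x a| ≤ ∑ i, ∑ j, |x i * (a i j * x j)| := by
        rw [h1]
        exact (Finset.abs_sum_le_sum_abs _ _).trans
          (Finset.sum_le_sum fun i _ => Finset.abs_sum_le_sum_abs _ _)
    _ ≤ ∑ i, ∑ j, ‖a‖ * ((x i * x i + x j * x j) / 2) :=
        Finset.sum_le_sum fun i _ => Finset.sum_le_sum fun j _ => h2 i j
    _ = n * ‖a‖ * (x ⬝ᵥ x) := by
        simp only [← Finset.mul_sum, ← Finset.sum_div, Finset.sum_add_distrib, dotProduct,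
          Finset.sum_const, Finset.card_univ, Fintype.card_fin, nsmul_eq_mul]
        simp only [mul_left_comm _ (n : ℝ), ← Finset.mul_sum]
        ring

lemma quadForm_one (x : Fin n → ℝ) : quadForm x 1 = x ⬝ᵥ x := by
  rw [quadForm_apply, Matrix.one_mulVec]

lemma dotProduct_self_nonneg' (x : Fin n → ℝ) : 0 ≤ x ⬝ᵥ x :=
  Finset.sum_nonneg fun i _ => mul_self_nonneg (x i)

/-- The positive semidefinite matrices form a closed set. -/
lemma posSemidef_of_tendsto {X : Type*} {F : Filter X} [F.NeBot]
    {f : X → Matrix (Fin n) (Fin n) ℝ} {a : Matrix (Fin n) (Fin n) ℝ}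
    (hf : Tendsto f F (𝓝 a)) (h : ∀ᶠ x in F, (f x).PosSemidef) : a.PosSemidef := by
  refine posSemidef_iff_quadForm.2 ⟨?_, fun x => ?_⟩
  · refine tendsto_nhds_unique (tendsto_matrix_transpose hf) (hf.congr' ?_)
    filter_upwards [h] with t ht using (posSemidef_iff_quadForm.1 ht).1.symm
  · refine ge_of_tendsto (((quadForm x).continuous.tendsto a).comp hf) ?_
    filter_upwards [h] with t ht using (posSemidef_iff_quadForm.1 ht).2 x

lemma posSemidef_transpose_mul_mul {a : Matrix (Fin m) (Fin m) ℝ} (ha : a.PosSemidef)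
    (b : Matrix (Fin m) (Fin n) ℝ) : (bᵀ * a * b).PosSemidef := by
  have := ha.conjTranspose_mul_mul_same b
  rwa [Matrix.conjTranspose_eq_transpose_of_trivial] at this

/-- Positive semidefiniteness of a matrix dominated by `c • 1` bounds its entries by `c`. -/
lemma norm_le_of_posSemidef_of_le {a : Matrix (Fin n) (Fin n) ℝ} {c : ℝ} (hc : 0 ≤ c)
    (ha : a.PosSemidef) (hac : (c • (1 : Matrix (Fin n) (Fin n) ℝ) - a).PosSemidef) :
    ‖a‖ ≤ c := by
  have hd : ∀ i, a i i ≤ c := fun i => by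
    have := hac.diag_nonneg (i := i)
    simpa using this
  have hs : ∀ i j, a j i = a i j := fun i j =>
    congrFun (congrFun (posSemidef_iff_quadForm.1 ha).1 i) j
  refine (Matrix.norm_le_iff hc).2 fun i j => ?_
  have h1 := (posSemidef_iff_quadForm.1 ha).2 (Pi.single i 1 + Pi.single j 1)
  have h2 := (posSemidef_iff_quadForm.1 ha).2 (Pi.single i 1 - Pi.single j 1)
  simp only [quadForm_apply, Matrix.mulVec_add, Matrix.mulVec_sub, add_dotProduct, sub_dotProduct,
    Matrix.mulVec_single_one, dotProduct_add, dotProduct_sub, single_one_dotProduct,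
    Matrix.col_apply] at h1 h2
  rw [Real.norm_eq_abs, abs_le]
  constructor <;> linarith [hd i, hd j, hs i j]

end MatrixCalculus

section Lyapunov

/-- A function controlled by its derivative which vanishes at the right end of an interval
vanishes identically. -/
lemma eq_zero_of_norm_deriv_le_of_tendsto_left {E : Type*} [NormedAddCommGroup E]
    [NormedSpace ℝ E] {f f' : ℝ → E} {a b K : ℝ}
    (hd : ∀ t ∈ Ioo a b, HasDerivAt f (f' t) t) (hK : ∀ t ∈ Ioo a b, ‖f' t‖ ≤ K * ‖f t‖)
    (hb : Tendsto f (𝓝[<] b) (𝓝 0)) : ∀ t ∈ Ioo a b, f t = 0 := by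
  intro t ht
  have key : ∀ t₁ ∈ Ioo t b, ‖f t‖ ≤ ‖f t₁‖ * Real.exp (K * (t₁ - t)) := by
    intro t₁ ht₁
    have hmem : ∀ s ∈ Icc 0 (t₁ - t), t₁ - s ∈ Ioo a b := fun s hs =>
      ⟨by linarith [ht.1, hs.2], by linarith [ht₁.2, hs.1]⟩
    have hd' : ∀ s ∈ Icc 0 (t₁ - t), HasDerivAt (fun s => f (t₁ - s)) (-f' (t₁ - s)) s := by
      intro s hs
      have h := (hd _ (hmem s hs)).scomp s ((hasDerivAt_id s).const_sub t₁)
      simpa [Function.comp_def] using h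
    have h := norm_le_gronwallBound_of_norm_deriv_right_le (f := fun s => f (t₁ - s))
      (f' := fun s => -f' (t₁ - s)) (δ := ‖f t₁‖) (K := K) (ε := 0) (a := 0) (b := t₁ - t)
      (fun s hs => (hd' s hs).continuousAt.continuousWithinAt)
      (fun s hs => (hd' s (Ico_subset_Icc_self hs)).hasDerivWithinAt) (by simp)
      (fun s hs => by simpa using hK _ (hmem s (Ico_subset_Icc_self hs)))
      (t₁ - t) ⟨by linarith [ht₁.1], le_rfl⟩
    simpa [gronwallBound_ε0] using h
  have hlim : Tendsto (fun t₁ => ‖f t₁‖ * Real.exp (K * (t₁ - t))) (𝓝[<] b)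
      (𝓝 (‖(0 : E)‖ * Real.exp (K * (b - t)))) := by
    refine hb.norm.mul (tendsto_nhdsWithin_of_tendsto_nhds ?_)
    exact Continuous.tendsto (by fun_prop) b
  have h0 : ‖f t‖ ≤ ‖(0 : E)‖ * Real.exp (K * (b - t)) := by
    refine ge_of_tendsto hlim ?_
    filter_upwards [Ioo_mem_nhdsLT ht.2] with t₁ ht₁ using key t₁ ht₁
  simpa using h0

variable {n : ℕ} {a b C : ℝ} {X X' M : ℝ → Matrix (Fin n) (Fin n) ℝ}
  {Xb : Matrix (Fin n) (Fin n) ℝ}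

lemma transpose_eq_of_lyapunov (hd : ∀ t ∈ Ioo a b, HasDerivAt X (X' t) t)
    (hF : ∀ t ∈ Ioo a b, (X' t + X t * M t + (M t)ᵀ * X t)ᵀ = X' t + X t * M t + (M t)ᵀ * X t)
    (hM : ∀ t ∈ Ioo a b, ‖M t‖ ≤ C) (hb : Tendsto X (𝓝[<] b) (𝓝 Xb)) (hXb : Xbᵀ = Xb) :
    ∀ t ∈ Ioo a b, (X t)ᵀ = X t := by
  have h := eq_zero_of_norm_deriv_le_of_tendsto_left (f := fun t => (X t)ᵀ - X t)
    (f' := fun t => (X' t)ᵀ - X' t) (K := 2 * n * C) (a := a) (b := b)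
    (fun t ht => (hasDerivAt_matrix_transpose (hd t ht)).sub (hd t ht)) ?_ ?_
  · exact fun t ht => sub_eq_zero.1 (h t ht)
  · intro t ht
    have h1 : (X' t)ᵀ - X' t = -(((X t)ᵀ - X t) * M t + (M t)ᵀ * ((X t)ᵀ - X t)) := by
      have := hF t ht
      simp only [Matrix.transpose_add, Matrix.transpose_mul, Matrix.transpose_transpose] at this
      rw [sub_mul, mul_sub]
      rw [← sub_eq_zero] at this ⊢
      rw [← this]
      abel
    have h2 := norm_matrix_mul_le ((X t)ᵀ - X t) (M t)
    have h3 := norm_matrix_mul_le (M t)ᵀ ((X t)ᵀ - X t)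
    rw [Matrix.norm_transpose] at h3
    have h4 : (n : ℝ) * ‖(X t)ᵀ - X t‖ * ‖M t‖ ≤ n * ‖(X t)ᵀ - X t‖ * C :=
      mul_le_mul_of_nonneg_left (hM t ht) (by positivity)
    rw [h1, norm_neg]
    refine (norm_add_le _ _).trans ?_
    linarith
  · have := (tendsto_matrix_transpose hb).sub hb
    rwa [hXb, sub_self] at this

lemma nonneg_of_hasDerivAt_of_pos_right {h : ℝ → ℝ} {h' t b : ℝ} (htb : t < b)
    (hd : HasDerivAt h h' t) (h0 : h t ≤ 0) (hpos : ∀ s ∈ Ioo t b, 0 < h s) : 0 ≤ h' := by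
  have h1 := (hasDerivWithinAt_iff_tendsto_slope' (s := Ioi t) (by simp)).1
    (hd.hasDerivWithinAt (s := Ioi t))
  refine ge_of_tendsto h1 ?_
  filter_upwards [Ioo_mem_nhdsGT htb] with s hs
  rw [slope_def_field]
  exact div_nonneg (by linarith [hpos s hs]) (by linarith [hs.1])

lemma quadForm_smul (r : ℝ) (x : Fin n → ℝ) (c : Matrix (Fin n) (Fin n) ℝ) :
    quadForm (r • x) c = r ^ 2 * quadForm x c := by
  simp only [quadForm_apply, Matrix.mulVec_smul, dotProduct_smul, smul_dotProduct, smul_eq_mul]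
  ring

lemma quadForm_nonneg_of_unit {c : Matrix (Fin n) (Fin n) ℝ}
    (h : ∀ x : Fin n → ℝ, x ⬝ᵥ x = 1 → 0 ≤ quadForm x c) (x : Fin n → ℝ) :
    0 ≤ quadForm x c := by
  rcases eq_or_ne x 0 with rfl | hx
  · simp [quadForm_apply]
  · have hpos : 0 < x ⬝ᵥ x :=
      (dotProduct_self_nonneg' x).lt_of_ne fun h0 => hx (dotProduct_self_eq_zero.1 h0.symm)
    have hs : Real.sqrt (x ⬝ᵥ x) ^ 2 = x ⬝ᵥ x := Real.sq_sqrt hpos.le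
    have hr : Real.sqrt (x ⬝ᵥ x) ≠ 0 := (Real.sqrt_pos.2 hpos).ne'
    have h1 := h ((Real.sqrt (x ⬝ᵥ x))⁻¹ • x) (by
      rw [smul_dotProduct, dotProduct_smul, smul_eq_mul, smul_eq_mul]
      nth_rewrite 3 [← hs]
      field_simp)
    rw [quadForm_smul] at h1
    exact nonneg_of_mul_nonneg_right h1 (by positivity)

lemma isCompact_unit_dotProduct : IsCompact {x : Fin n → ℝ | x ⬝ᵥ x = 1} := by
  refine Metric.isCompact_of_isClosed_isBounded
    (isClosed_eq (continuous_id.dotProduct continuous_id) continuous_const)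
    (Metric.isBounded_closedBall (x := (0 : Fin n → ℝ)) (r := 1) |>.subset fun x hx => ?_)
  rw [mem_closedBall_zero_iff, pi_norm_le_iff_of_nonneg zero_le_one]
  intro i
  have h1 : x i * x i ≤ 1 := by
    rw [← show x ⬝ᵥ x = 1 from hx]
    exact Finset.single_le_sum (f := fun i => x i * x i) (fun i _ => mul_self_nonneg _)
      (Finset.mem_univ i)
  rw [Real.norm_eq_abs]
  exact abs_le_one_iff_mul_self_le_one.2 h1

lemma continuous_quadForm_uncurry :
    Continuous fun p : (Fin n → ℝ) × Matrix (Fin n) (Fin n) ℝ => quadForm p.1 p.2 :=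
  continuous_fst.dotProduct (continuous_snd.matrix_mulVec continuous_fst)

/-- Strict barrier form of the comparison principle for Lyapunov differential inequalities. -/
lemma quadForm_add_exp_pos_of_lyapunov {a₁ ε : ℝ} (hε : 0 < ε)
    (hd : ∀ t ∈ Ico a₁ b, HasDerivAt X (X' t) t)
    (hF : ∀ t ∈ Ico a₁ b, (-(X' t + X t * M t + (M t)ᵀ * X t)).PosSemidef)
    (hM : ∀ t ∈ Ico a₁ b, ‖M t‖ ≤ C) (hX : ContinuousOn X (Icc a₁ b))
    (hsymm : ∀ t ∈ Ico a₁ b, (X t)ᵀ = X t) (hb : (X b).PosSemidef) :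
    ∀ t ∈ Icc a₁ b, ∀ x : Fin n → ℝ, x ⬝ᵥ x = 1 →
      0 < quadForm x (X t) + ε * Real.exp ((2 * n * C + 1) * (b - t)) := by
  set c : ℝ := 2 * n * C + 1
  set q : ℝ × (Fin n → ℝ) → ℝ := fun p =>
    quadForm p.2 (X p.1) + ε * Real.exp (c * (b - p.1)) with hq
  set S : Set (ℝ × (Fin n → ℝ)) := Icc a₁ b ×ˢ {x | x ⬝ᵥ x = 1} with hS
  have hScomp : IsCompact S := isCompact_Icc.prod isCompact_unit_dotProduct
  have hqc : ContinuousOn q S := by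
    have h1 : ContinuousOn (fun p : ℝ × (Fin n → ℝ) => X p.1) S :=
      hX.comp continuous_fst.continuousOn fun p hp => hp.1
    have h2 : Continuous fun p : ℝ × (Fin n → ℝ) => ε * Real.exp (c * (b - p.1)) := by fun_prop
    have h3 : ContinuousOn (fun p : ℝ × (Fin n → ℝ) => (p.2, X p.1)) S :=
      continuous_snd.continuousOn.prodMk h1
    exact (continuous_quadForm_uncurry.comp_continuousOn h3).add h2.continuousOn
  by_contra! hcon
  obtain ⟨t', ht', x', hx', hneg⟩ := hcon
  have hZ : IsCompact (S ∩ q ⁻¹' Iic 0) :=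
    hScomp.of_isClosed_subset (hqc.preimage_isClosed_of_isClosed hScomp.isClosed isClosed_Iic)
      inter_subset_left
  obtain ⟨⟨t₀, x₀⟩, ⟨⟨ht₀, hx₀⟩, hq₀⟩, hmax⟩ :=
    hZ.exists_isMaxOn ⟨(t', x'), ⟨ht', hx'⟩, hneg⟩ continuous_fst.continuousOn
  simp only [mem_ofPred_eq] at hx₀ ht₀
  have hlt : t₀ < b := by
    refine ht₀.2.lt_of_ne fun h => ?_
    have h1 := (posSemidef_iff_quadForm.1 hb).2 x₀
    have h2 : q (t₀, x₀) ≤ 0 := hq₀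
    simp only [hq, h] at h2
    have := mul_pos hε (Real.exp_pos (c * (b - b)))
    linarith
  have hpos : ∀ t ∈ Ioc t₀ b, ∀ x : Fin n → ℝ, x ⬝ᵥ x = 1 → 0 < q (t, x) := by
    intro t ht x hx
    by_contra! hle
    have := hmax (show (t, x) ∈ S ∩ q ⁻¹' Iic 0 from
      ⟨⟨⟨ht₀.1.trans ht.1.le, ht.2⟩, hx⟩, hle⟩)
    exact absurd ht.1 (not_lt.2 this)
  have ht₀' : t₀ ∈ Ico a₁ b := ⟨ht₀.1, hlt⟩
  have hnonneg : ∀ x : Fin n → ℝ, x ⬝ᵥ x = 1 → 0 ≤ q (t₀, x) := by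
    intro x hx
    have hcont : ContinuousWithinAt (fun t => q (t, x)) (Ioi t₀) t₀ := by
      refine ContinuousAt.continuousWithinAt (ContinuousAt.add ?_ (by fun_prop))
      exact (quadForm x).continuous.continuousAt.comp (hd t₀ ht₀').continuousAt
    refine ge_of_tendsto hcont ?_
    filter_upwards [Ioc_mem_nhdsGT hlt] with t ht using (hpos t ht x hx).le
  set e : ℝ := ε * Real.exp (c * (b - t₀)) with he
  have hepos : 0 < e := by positivity
  have hq_eq : ∀ x : Fin n → ℝ, quadForm x (X t₀ + e • 1) = quadForm x (X t₀) + e * (x ⬝ᵥ x) := by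
    intro x
    rw [map_add, map_smul, quadForm_one, smul_eq_mul]
  have hY : (X t₀ + e • (1 : Matrix (Fin n) (Fin n) ℝ)).PosSemidef := by
    refine posSemidef_iff_quadForm.2 ⟨?_, quadForm_nonneg_of_unit fun x hx => ?_⟩
    · rw [Matrix.transpose_add, hsymm t₀ ht₀', Matrix.transpose_smul, Matrix.transpose_one]
    · rw [hq_eq, hx, mul_one]
      exact hnonneg x hx
  have hzero : quadForm x₀ (X t₀ + e • 1) = 0 := by
    rw [hq_eq, hx₀, mul_one]
    exact le_antisymm hq₀ (hnonneg x₀ hx₀)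
  have hker : X t₀ *ᵥ x₀ = -(e • x₀) := by
    have h1 : (X t₀ + e • (1 : Matrix (Fin n) (Fin n) ℝ)) *ᵥ x₀ = 0 :=
      (hY.dotProduct_mulVec_zero_iff x₀).1 (by simpa [quadForm_apply] using hzero)
    rw [Matrix.add_mulVec, Matrix.smul_mulVec, Matrix.one_mulVec] at h1
    exact eq_neg_of_add_eq_zero_left h1
  have hderiv : HasDerivAt (fun t => q (t, x₀)) (quadForm x₀ (X' t₀) + -(c * e)) t₀ := by
    have h1 : HasDerivAt (fun t => quadForm x₀ (X t)) (quadForm x₀ (X' t₀)) t₀ :=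
      (quadForm x₀).hasFDerivAt.comp_hasDerivAt t₀ (hd t₀ ht₀')
    have h2 : HasDerivAt (fun t => ε * Real.exp (c * (b - t))) (-(c * e)) t₀ := by
      have h3 := (((hasDerivAt_id t₀).const_sub b).const_mul c).exp.const_mul ε
      refine h3.congr_deriv ?_
      simp only [he, id]
      ring
    exact h1.add h2
  have hge := nonneg_of_hasDerivAt_of_pos_right hlt hderiv hq₀
    fun s hs => hpos s ⟨hs.1, hs.2.le⟩ x₀ hx₀
  have hFx := (posSemidef_iff_quadForm.1 (hF t₀ ht₀')).2 x₀
  have h1 : quadForm x₀ (X t₀ * M t₀) = -(e * quadForm x₀ (M t₀)) := by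
    have := quadForm_mul_eq x₀ (X t₀) (M t₀)
    rw [hsymm t₀ ht₀', hker, neg_dotProduct, smul_dotProduct] at this
    exact this
  have h2 : quadForm x₀ ((M t₀)ᵀ * X t₀) = -(e * quadForm x₀ (M t₀)) := by
    rw [quadForm_mul_eq, hker, dotProduct_neg, dotProduct_smul, dotProduct_comm]
    rfl
  rw [map_neg, map_add, map_add, h1, h2] at hFx
  have h3 := (le_abs_self _).trans (abs_quadForm_le x₀ (M t₀))
  rw [hx₀, mul_one] at h3
  have h4 : (n : ℝ) * ‖M t₀‖ ≤ n * C :=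
    mul_le_mul_of_nonneg_left (hM t₀ ht₀') (by positivity)
  have h5 : e * quadForm x₀ (M t₀) ≤ e * (n * C) :=
    mul_le_mul_of_nonneg_left (h3.trans h4) hepos.le
  have h6 : c * e = 2 * (e * (n * C)) + e := by
    simp only [c]
    ring
  linarith

/-- Comparison principle: a supersolution of a homogeneous Lyapunov equation which is positive
semidefinite at the right end point stays positive semidefinite. -/
lemma posSemidef_of_lyapunov (hd : ∀ t ∈ Ioo a b, HasDerivAt X (X' t) t)
    (hF : ∀ t ∈ Ioo a b, (-(X' t + X t * M t + (M t)ᵀ * X t)).PosSemidef)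
    (hM : ∀ t ∈ Ioo a b, ‖M t‖ ≤ C) (hb : Tendsto X (𝓝[<] b) (𝓝 Xb)) (hXb : Xb.PosSemidef) :
    ∀ t ∈ Ioo a b, (X t).PosSemidef := by
  have hsymm := transpose_eq_of_lyapunov hd (fun t ht => by
    have := (posSemidef_iff_quadForm.1 (hF t ht)).1
    rwa [Matrix.transpose_neg, neg_inj] at this) hM hb (posSemidef_iff_quadForm.1 hXb).1
  intro t ht
  have hsub : ∀ s ∈ Ico t b, s ∈ Ioo a b := fun s hs => ⟨ht.1.trans_le hs.1, hs.2⟩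
  set Y := Function.update X b Xb with hYdef
  have hYX : ∀ s ∈ Ico t b, Y s = X s := fun s hs => Function.update_of_ne hs.2.ne _ _
  have hYd : ∀ s ∈ Ico t b, HasDerivAt Y (X' s) s := fun s hs =>
    (hd s (hsub s hs)).congr_of_eventuallyEq (by
      filter_upwards [Iio_mem_nhds hs.2] with r hr using Function.update_of_ne (ne_of_lt hr) _ _)
  have hYc : ContinuousOn Y (Icc t b) := by
    intro s hs
    rcases hs.2.lt_or_eq with h | h
    · exact (hYd s ⟨hs.1, h⟩).continuousAt.continuousWithinAt
    · rw [h, hYdef, continuousWithinAt_update_same]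
      refine hb.mono_left (nhdsWithin_mono _ ?_)
      rintro r ⟨hr, hrb⟩
      exact hr.2.lt_of_ne hrb
  refine posSemidef_iff_quadForm.2 ⟨hsymm t ht, quadForm_nonneg_of_unit fun x hx => ?_⟩
  have key : ∀ ε > 0, 0 ≤ quadForm x (X t) + ε * Real.exp ((2 * n * C + 1) * (b - t)) := by
    intro ε hε
    have := quadForm_add_exp_pos_of_lyapunov (X := Y) (X' := X') (M := M) hε hYd
      (fun s hs => by rw [hYX s hs]; exact hF s (hsub s hs)) (fun s hs => hM s (hsub s hs)) hYc
      (fun s hs => by rw [hYX s hs]; exact hsymm s (hsub s hs))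
      (by rw [hYdef, Function.update_self]; exact hXb) t ⟨le_rfl, ht.2.le⟩ x hx
    rw [hYX t ⟨le_rfl, ht.2⟩] at this
    exact this.le
  have hlim : Tendsto (fun ε : ℝ => quadForm x (X t)
      + ε * Real.exp ((2 * n * C + 1) * (b - t))) (𝓝[>] 0)
      (𝓝 (quadForm x (X t) + 0 * Real.exp ((2 * n * C + 1) * (b - t)))) :=
    tendsto_nhdsWithin_of_tendsto_nhds (Continuous.tendsto (by fun_prop) 0)
  have := ge_of_tendsto hlim (by filter_upwards [self_mem_nhdsWithin] with ε hε using key ε hε)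
  simpa using this

end Lyapunov

section PiecewiseContinuous

/-- `f` is continuous on each `[t_k, t_{k+1})`, `j ≤ k < N`, with a left limit at `t_{k+1}`. -/
def PiecewiseContinuous {E : Type*} [TopologicalSpace E] (j N : ℕ) (tp : ℕ → ℝ) (f : ℝ → E) :
    Prop :=
  ∀ k, j ≤ k → k < N →
    ∃ g, ContinuousOn g (Icc (tp k) (tp (k + 1))) ∧ EqOn f g (Ico (tp k) (tp (k + 1)))

lemma exists_mem_Ico_of_mem_Ico {j N : ℕ} {tp : ℕ → ℝ} (hjN : j ≤ N) {s : ℝ}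
    (hs : s ∈ Ico (tp j) (tp N)) : ∃ k, j ≤ k ∧ k < N ∧ s ∈ Ico (tp k) (tp (k + 1)) := by
  induction N, hjN using Nat.le_induction with
  | base => exact absurd hs.2 (not_lt.2 hs.1)
  | succ N hN ih =>
    rcases lt_or_ge s (tp N) with h | h
    · obtain ⟨k, hjk, hk, hks⟩ := ih ⟨hs.1, h⟩
      exact ⟨k, hjk, hk.trans N.lt_succ_self, hks⟩
    · exact ⟨N, hN, N.lt_succ_self, h, hs.2⟩

lemma node_le_node {N : ℕ} {tp : ℕ → ℝ} (htp : ∀ k < N, tp k < tp (k + 1)) {i k : ℕ}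
    (hik : i ≤ k) (hk : k ≤ N) : tp i ≤ tp k := by
  induction k, hik using Nat.le_induction with
  | base => exact le_rfl
  | succ k hik ih => exact (ih (by omega)).trans (htp k (by omega)).le

lemma continuousOn_update_right {E : Type*} [TopologicalSpace E] {f : ℝ → E} {a b : ℝ} {l : E}
    (hf : ContinuousOn f (Ico a b)) (hl : Tendsto f (𝓝[<] b) (𝓝 l)) :
    ContinuousOn (Function.update f b l) (Icc a b) := by
  intro s hs
  rcases hs.2.eq_or_lt with rfl | hlt
  · rw [continuousWithinAt_update_same]
    exact hl.mono_left (nhdsWithin_mono _ fun r hr => lt_of_le_of_ne hr.1.2 hr.2)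
  · refine (continuousWithinAt_update_of_ne hlt.ne).2
      ((hf s ⟨hs.1, hlt⟩).mono_of_mem_nhdsWithin ?_)
    filter_upwards [self_mem_nhdsWithin, mem_nhdsWithin_of_mem_nhds (Iio_mem_nhds hlt)]
      with r hr hr' using ⟨hr.1, hr'⟩

variable {E F H : Type*} {j N : ℕ} {tp : ℕ → ℝ}

namespace PiecewiseContinuous

lemma mono [TopologicalSpace E] {i : ℕ} {f : ℝ → E} (hf : PiecewiseContinuous j N tp f)
    (hij : j ≤ i) : PiecewiseContinuous i N tp f :=
  fun k hk hkN => hf k (hij.trans hk) hkN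

lemma of_continuousOn [TopologicalSpace E] {f : ℝ → E} (htp : ∀ k < N, tp k < tp (k + 1))
    (hf : ContinuousOn f (Icc (tp j) (tp N))) : PiecewiseContinuous j N tp f :=
  fun _ hk hkN => ⟨f, hf.mono (Icc_subset_Icc (node_le_node htp hk hkN.le)
    (node_le_node htp hkN le_rfl)), fun _ _ => rfl⟩

lemma map₂ [TopologicalSpace E] [TopologicalSpace F] [TopologicalSpace H] {f : ℝ → E}
    {g : ℝ → F} (hf : PiecewiseContinuous j N tp f) (hg : PiecewiseContinuous j N tp g)
    {φ : E → F → H} (hφ : Continuous fun p : E × F => φ p.1 p.2) :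
    PiecewiseContinuous j N tp fun s => φ (f s) (g s) := by
  intro k hk hkN
  obtain ⟨f₁, hf₁, hff₁⟩ := hf k hk hkN
  obtain ⟨g₁, hg₁, hgg₁⟩ := hg k hk hkN
  refine ⟨fun s => φ (f₁ s) (g₁ s), hφ.comp_continuousOn (hf₁.prodMk hg₁), fun s hs => ?_⟩
  simp only [hff₁ hs, hgg₁ hs]

lemma add [TopologicalSpace E] [Add E] [ContinuousAdd E] {f g : ℝ → E}
    (hf : PiecewiseContinuous j N tp f) (hg : PiecewiseContinuous j N tp g) :
    PiecewiseContinuous j N tp fun s => f s + g s :=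
  hf.map₂ hg continuous_add

lemma sub [TopologicalSpace E] [AddGroup E] [IsTopologicalAddGroup E] {f g : ℝ → E}
    (hf : PiecewiseContinuous j N tp f) (hg : PiecewiseContinuous j N tp g) :
    PiecewiseContinuous j N tp fun s => f s - g s :=
  hf.map₂ hg continuous_sub

lemma matrix_mul {l m n : ℕ} {f : ℝ → Matrix (Fin l) (Fin m) ℝ} {g : ℝ → Matrix (Fin m) (Fin n) ℝ}
    (hf : PiecewiseContinuous j N tp f) (hg : PiecewiseContinuous j N tp g) :
    PiecewiseContinuous j N tp fun s => f s * g s :=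
  hf.map₂ hg (continuous_fst.matrix_mul continuous_snd)

lemma matrix_transpose {m n : ℕ} {f : ℝ → Matrix (Fin m) (Fin n) ℝ}
    (hf : PiecewiseContinuous j N tp f) : PiecewiseContinuous j N tp fun s => (f s)ᵀ :=
  hf.map₂ hf (φ := fun a _ => aᵀ) continuous_fst.matrix_transpose

lemma continuousWithinAt_Ici [TopologicalSpace E] {f : ℝ → E}
    (hf : PiecewiseContinuous j N tp f) (hjN : j ≤ N) {s : ℝ} (hs : s ∈ Ico (tp j) (tp N)) :
    ContinuousWithinAt f (Ici s) s := by
  obtain ⟨k, hjk, hkN, hks⟩ := exists_mem_Ico_of_mem_Ico hjN hs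
  obtain ⟨g, hg, hfg⟩ := hf k hjk hkN
  have h1 : ContinuousWithinAt g (Ico s (tp (k + 1))) s :=
    (hg s (Ico_subset_Icc_self hks)).mono fun r hr => ⟨hks.1.trans hr.1, hr.2.le⟩
  have h2 : ContinuousWithinAt f (Ico s (tp (k + 1))) s :=
    h1.congr (fun r hr => hfg ⟨hks.1.trans hr.1, hr.2⟩) (hfg hks)
  exact h2.mono_of_mem_nhdsWithin (Ico_mem_nhdsGE hks.2)

lemma continuousAt [TopologicalSpace E] {f : ℝ → E} (hf : PiecewiseContinuous j N tp f) {k : ℕ}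
    (hjk : j ≤ k) (hkN : k < N) {s : ℝ} (hs : s ∈ Ioo (tp k) (tp (k + 1))) :
    ContinuousAt f s := by
  obtain ⟨g, hg, hfg⟩ := hf k hjk hkN
  refine ((hg.mono Ioo_subset_Icc_self).continuousAt (Ioo_mem_nhds hs.1 hs.2)).congr ?_
  filter_upwards [Ioo_mem_nhds hs.1 hs.2] with r hr using (hfg (Ioo_subset_Ico_self hr)).symm

lemma exists_norm_le [NormedAddCommGroup E] {f : ℝ → E} (hf : PiecewiseContinuous j N tp f)
    (hjN : j ≤ N) : ∃ K, 0 ≤ K ∧ ∀ s ∈ Ico (tp j) (tp N), ‖f s‖ ≤ K := by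
  have key : ∀ k, ∃ K, 0 ≤ K ∧ (j ≤ k → k < N → ∀ s ∈ Ico (tp k) (tp (k + 1)), ‖f s‖ ≤ K) := by
    intro k
    by_cases hk : j ≤ k ∧ k < N
    · obtain ⟨g, hg, hfg⟩ := hf k hk.1 hk.2
      obtain ⟨K, hK⟩ := isCompact_Icc.exists_bound_of_continuousOn hg
      refine ⟨max K 0, le_max_right _ _, fun _ _ s hs => ?_⟩
      rw [hfg hs]
      exact (hK s (Ico_subset_Icc_self hs)).trans (le_max_left _ _)
    · exact ⟨0, le_rfl, fun h1 h2 => absurd ⟨h1, h2⟩ hk⟩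
  choose K hK0 hK using key
  refine ⟨∑ k ∈ Finset.range N, K k, Finset.sum_nonneg fun k _ => hK0 k, fun s hs => ?_⟩
  obtain ⟨k, hjk, hkN, hks⟩ := exists_mem_Ico_of_mem_Ico hjN hs
  exact (hK k hjk hkN s hks).trans
    (Finset.single_le_sum (fun k _ => hK0 k) (Finset.mem_range.2 hkN))

lemma intervalIntegrable [NormedAddCommGroup E] {f : ℝ → E}
    (hf : PiecewiseContinuous j N tp f) (hjN : j ≤ N) (htp : ∀ k < N, tp k < tp (k + 1)) :
    IntervalIntegrable f volume (tp j) (tp N) := by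
  refine IntervalIntegrable.trans_iterate_Ico hjN fun k hk => ?_
  obtain ⟨g, hg, hfg⟩ := hf k hk.1 hk.2
  have hle := (htp k hk.2).le
  rw [intervalIntegrable_iff_integrableOn_Ico_of_le hle]
  exact (hg.integrableOn_Icc.mono_set Ico_subset_Icc_self).congr_fun hfg.symm measurableSet_Ico

lemma intervalIntegrable_of_mem [NormedAddCommGroup E] {f : ℝ → E}
    (hf : PiecewiseContinuous j N tp f) (hjN : j ≤ N) (htp : ∀ k < N, tp k < tp (k + 1))
    {a b : ℝ} (ha : a ∈ Icc (tp j) (tp N)) (hb : b ∈ Icc (tp j) (tp N)) :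
    IntervalIntegrable f volume a b := by
  refine (hf.intervalIntegrable hjN htp).mono_set ?_
  rw [uIcc_of_le (node_le_node htp hjN le_rfl)]
  exact uIcc_subset_Icc ha hb

end PiecewiseContinuous

end PiecewiseContinuous

section Volterra

variable {E : Type*} [NormedAddCommGroup E] [NormedSpace ℝ E] {a b K : ℝ} {C : ℝ → E →L[ℝ] E}
  {Φ : ℝ → E} {Φ₀ : E}

lemma continuousOn_of_volterra
    (hΦ : ∀ s ∈ Icc a b, Φ s = Φ₀ + ∫ r in a..s, C r (Φ r))
    (hab : a ≤ b) (hint : IntervalIntegrable (fun r => C r (Φ r)) volume a b) :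
    ContinuousOn Φ (Icc a b) := by
  refine ContinuousOn.congr (continuousOn_const.add ?_) hΦ
  have := intervalIntegral.continuousOn_primitive_interval'
    (f := fun r => C r (Φ r)) hint left_mem_uIcc
  rwa [uIcc_of_le hab] at this

lemma hasDerivWithinAt_of_volterra [CompleteSpace E]
    (hΦ : ∀ s ∈ Icc a b, Φ s = Φ₀ + ∫ r in a..s, C r (Φ r))
    (hab : a ≤ b) (hint : IntervalIntegrable (fun r => C r (Φ r)) volume a b)
    (hCc : ∀ s ∈ Ico a b, ContinuousWithinAt C (Ici s) s) {s : ℝ} (hs : s ∈ Ico a b) :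
    HasDerivWithinAt Φ (C s (Φ s)) (Ici s) s := by
  have hcont := continuousOn_of_volterra hΦ hab hint
  have hIcc : Icc a b ∈ 𝓝[≥] s :=
    mem_of_superset (Icc_mem_nhdsGE hs.2) (Icc_subset_Icc_left hs.1)
  have hΦs : ContinuousWithinAt Φ (Ici s) s :=
    (hcont s (Ico_subset_Icc_self hs)).mono_of_mem_nhdsWithin hIcc
  have hmeas : StronglyMeasurableAtFilter (fun r => C r (Φ r)) (𝓝[>] s) volume := by
    refine ⟨Ioc s b, Ioc_mem_nhdsGT hs.2, ?_⟩
    have := ((intervalIntegrable_iff_integrableOn_Ioc_of_le hab).1 hint).aestronglyMeasurable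
    exact this.mono_set (Ioc_subset_Ioc_left hs.1)
  have hint' : IntervalIntegrable (fun r => C r (Φ r)) volume a s :=
    hint.mono_set (by
      rw [uIcc_of_le hab, uIcc_of_le hs.1]; exact Icc_subset_Icc_right hs.2.le)
  have h := (intervalIntegral.integral_hasDerivWithinAt_right (s := Ici s) (t := Ioi s) hint' hmeas
    (((hCc s hs).clm_apply hΦs).mono_left (nhdsWithin_mono _ Ioi_subset_Ici_self)))
  refine (h.const_add Φ₀).congr_of_eventuallyEq ?_ (hΦ s (Ico_subset_Icc_self hs))
  filter_upwards [hIcc] with r hr using hΦ r hr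

lemma norm_le_of_volterra [CompleteSpace E]
    (hΦ : ∀ s ∈ Icc a b, Φ s = Φ₀ + ∫ r in a..s, C r (Φ r))
    (hab : a ≤ b) (hint : IntervalIntegrable (fun r => C r (Φ r)) volume a b)
    (hCc : ∀ s ∈ Ico a b, ContinuousWithinAt C (Ici s) s)
    (hCK : ∀ s ∈ Ico a b, ‖C s‖ ≤ K) :
    ‖Φ b‖ ≤ ‖Φ₀‖ * Real.exp (K * (b - a)) := by
  have h := norm_le_gronwallBound_of_norm_deriv_right_le (f := Φ) (f' := fun s => C s (Φ s))
    (δ := ‖Φ₀‖) (K := K) (ε := 0) (continuousOn_of_volterra hΦ hab hint)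
    (fun s hs => hasDerivWithinAt_of_volterra hΦ hab hint hCc hs)
    (by rw [hΦ a (left_mem_Icc.2 hab)]; simp) (fun s hs => by
      rw [add_zero]
      refine ((C s).le_opNorm _).trans ?_
      have := hCK s hs
      gcongr) b (right_mem_Icc.2 hab)
  rwa [gronwallBound_ε0] at h

/-- The integrand of a linear Volterra equation with bounded coefficient is automatically
integrable, even though this is not part of the equation. -/
lemma intervalIntegrable_of_volterra [CompleteSpace E]
    (hΦ : ∀ s ∈ Icc a b, Φ s = Φ₀ + ∫ r in a..s, C r (Φ r))
    (hab : a ≤ b) (hC : IntervalIntegrable C volume a b)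
    (hCc : ∀ s ∈ Ico a b, ContinuousWithinAt C (Ici s) s) (hK : 0 ≤ K)
    (hCK : ∀ s ∈ Ico a b, ‖C s‖ ≤ K) :
    IntervalIntegrable (fun r => C r (Φ r)) volume a b := by
  set f : ℝ → E := fun r => C r (Φ r) with hf
  set S : Set ℝ := {s | s ∈ Icc a b ∧ IntervalIntegrable f volume a s} with hS
  have haS : a ∈ S := ⟨left_mem_Icc.2 hab, IntervalIntegrable.refl⟩
  have hSb : BddAbove S := ⟨b, fun s hs => hs.1.2⟩
  set σ := sSup S with hσ
  have haσ : a ≤ σ := le_csSup hSb haS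
  have hσb : σ ≤ b := csSup_le ⟨a, haS⟩ fun s hs => hs.1.2
  have hlt : ∀ s ∈ Ico a σ, IntervalIntegrable f volume a s := by
    intro s hs
    obtain ⟨s', hs', hss'⟩ := exists_lt_of_lt_csSup ⟨a, haS⟩ hs.2
    refine hs'.2.mono_set ?_
    rw [uIcc_of_le hs'.1.1, uIcc_of_le hs.1]
    exact Icc_subset_Icc_right hss'.le
  have hΦ' : ∀ s ∈ Ico a σ, ∀ r ∈ Icc a s, Φ r = Φ₀ + ∫ u in a..r, C u (Φ u) :=
    fun s hs r hr => hΦ r ⟨hr.1, hr.2.trans (hs.2.le.trans hσb)⟩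
  have hsub : ∀ s ∈ Ico a σ, ∀ r ∈ Ico a s, r ∈ Ico a b :=
    fun s hs r hr => ⟨hr.1, hr.2.trans (hs.2.trans_le hσb)⟩
  have hbound : ∀ s ∈ Ico a σ, ‖Φ s‖ ≤ ‖Φ₀‖ * Real.exp (K * (b - a)) := by
    intro s hs
    have h1 := norm_le_of_volterra (hΦ' s hs) hs.1 (hlt s hs)
      (fun r hr => hCc r (hsub s hs r hr)) (fun r hr => hCK r (hsub s hs r hr))
    refine h1.trans ?_
    have := hs.2.le.trans hσb
    gcongr
  have hcont : ContinuousOn Φ (Ico a σ) := by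
    intro s hs
    obtain ⟨s', hss', hs'σ⟩ := exists_between hs.2
    have hs' : s' ∈ Ico a σ := ⟨hs.1.trans hss'.le, hs'σ⟩
    have h1 := continuousOn_of_volterra (hΦ' s' hs') hs'.1 (hlt s' hs')
    refine (h1 s ⟨hs.1, hss'.le⟩).mono_of_mem_nhdsWithin ?_
    filter_upwards [self_mem_nhdsWithin, mem_nhdsWithin_of_mem_nhds (Iio_mem_nhds hss')]
      with r hr hr' using ⟨hr.1, le_of_lt hr'⟩
  have hCint : IntegrableOn C (Ico a b) :=
    (intervalIntegrable_iff_integrableOn_Ico_of_le hab).1 hC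
  have hleft : IntegrableOn f (Ico a σ) := by
    have hCm : AEStronglyMeasurable C (volume.restrict (Ico a σ)) :=
      (hCint.mono_set (Ico_subset_Ico_right hσb)).aestronglyMeasurable
    refine IntegrableOn.of_bound (by simp)
      (isBoundedBilinearMap_apply.continuous.comp_aestronglyMeasurable
        (hCm.prodMk (hcont.aestronglyMeasurable measurableSet_Ico)))
      (K * (‖Φ₀‖ * Real.exp (K * (b - a)))) ?_
    refine (ae_restrict_iff' measurableSet_Ico).2 (ae_of_all _ fun s hs => ?_)
    refine ((C s).le_opNorm _).trans ?_
    have h1 := hCK s ⟨hs.1, hs.2.trans_le hσb⟩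
    have h2 := hbound s hs
    gcongr
  have hright : IntegrableOn f (Ioo σ b) := by
    have hCm : IntegrableOn C (Ioo σ b) := hCint.mono_set fun s hs => ⟨haσ.trans hs.1.le, hs.2⟩
    have h1 : IntegrableOn (fun s => C s Φ₀) (Ioo σ b) := by
      refine IntegrableOn.of_bound (by simp)
        (isBoundedBilinearMap_apply.continuous.comp_aestronglyMeasurable
          (hCm.aestronglyMeasurable.prodMk aestronglyMeasurable_const)) (K * ‖Φ₀‖) ?_
      refine (ae_restrict_iff' measurableSet_Ioo).2 (ae_of_all _ fun s hs => ?_)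
      refine ((C s).le_opNorm _).trans ?_
      have h1 := hCK s ⟨haσ.trans hs.1.le, hs.2⟩
      gcongr
    refine h1.congr_fun (fun s hs => ?_) measurableSet_Ioo
    have hsI : s ∈ Icc a b := ⟨haσ.trans hs.1.le, hs.2.le⟩
    have hns : ¬ IntervalIntegrable f volume a s := fun hi =>
      absurd hs.1 (not_lt.2 (le_csSup hSb ⟨hsI, hi⟩))
    simp only [hf]
    rw [hΦ s hsI, intervalIntegral.integral_undef hns, add_zero]
  rw [intervalIntegrable_iff_integrableOn_Ioo_of_le hab]
  refine ((hleft.union hright).union (integrableOn_singleton (x := σ) (by simp) (by simp))).mono_set ?_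
  intro s hs
  rcases lt_trichotomy s σ with h | h | h
  · exact Or.inl (Or.inl ⟨hs.1.le, h⟩)
  · exact Or.inr h
  · exact Or.inl (Or.inr ⟨h, hs.2⟩)

end Volterra

section BilinearVolterra

lemma regular_of_volterra {E : Type*} [NormedAddCommGroup E] [NormedSpace ℝ E]
    [FiniteDimensional ℝ E] {μ : E →ₗ[ℝ] E →ₗ[ℝ] E} {j N : ℕ} {tp : ℕ → ℝ} {C Φ : ℝ → E} {Φ₀ : E}
    (hC : PiecewiseContinuous j N tp C) (hjN : j ≤ N) (htp : ∀ k < N, tp k < tp (k + 1))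
    (hΦ : ∀ s ∈ Icc (tp j) (tp N), Φ s = Φ₀ + ∫ r in (tp j)..s, μ (C r) (Φ r)) :
    ContinuousOn Φ (Icc (tp j) (tp N)) ∧
      ∀ s ∈ Ico (tp j) (tp N), HasDerivWithinAt Φ (μ (C s) (Φ s)) (Ici s) s := by
  have : CompleteSpace E := FiniteDimensional.complete ℝ E
  have hab := node_le_node htp hjN le_rfl
  let ν : E →L[ℝ] E →L[ℝ] E := LinearMap.toContinuousLinearMap
    ((LinearMap.toContinuousLinearMap : (E →ₗ[ℝ] E) ≃ₗ[ℝ] _).toLinearMap ∘ₗ μ)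
  have hD : PiecewiseContinuous j N tp fun s => ν (C s) :=
    hC.map₂ hC (φ := fun a _ => ν a) (ν.continuous.comp continuous_fst)
  obtain ⟨K, hK, hCK⟩ := hD.exists_norm_le hjN
  have hDc : ∀ s ∈ Ico (tp j) (tp N), ContinuousWithinAt (fun s => ν (C s)) (Ici s) s :=
    fun s hs => hD.continuousWithinAt_Ici hjN hs
  have hint := intervalIntegrable_of_volterra (C := fun s => ν (C s)) hΦ hab
    (hD.intervalIntegrable hjN htp) hDc hK hCK
  exact ⟨continuousOn_of_volterra (C := fun s => ν (C s)) hΦ hab hint,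
    fun s hs => hasDerivWithinAt_of_volterra (C := fun s => ν (C s)) hΦ hab hint hDc hs⟩

end BilinearVolterra

section MatrixVolterra

variable {n N j : ℕ} {tp : ℕ → ℝ} {C Φ : ℝ → Matrix (Fin n) (Fin n) ℝ}

lemma regular_of_matrix_volterra (hC : PiecewiseContinuous j N tp C) (hjN : j ≤ N)
    (htp : ∀ k < N, tp k < tp (k + 1))
    (hΦ : ∀ s ∈ Icc (tp j) (tp N), Φ s = 1 + ∫ r in (tp j)..s, C r * Φ r) :
    ContinuousOn Φ (Icc (tp j) (tp N)) ∧
      ∀ s ∈ Ico (tp j) (tp N), HasDerivWithinAt Φ (C s * Φ s) (Ici s) s :=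
  regular_of_volterra (μ := LinearMap.mul ℝ (Matrix (Fin n) (Fin n) ℝ)) hC hjN htp hΦ

/-- The evolution property of the fundamental solutions. -/
lemma volterra_comp {i : ℕ} {Φ' : ℝ → Matrix (Fin n) (Fin n) ℝ}
    (hC : PiecewiseContinuous j N tp C) (hji : j ≤ i) (hiN : i ≤ N)
    (htp : ∀ k < N, tp k < tp (k + 1))
    (hΦ : ∀ s ∈ Icc (tp j) (tp N), Φ s = 1 + ∫ r in (tp j)..s, C r * Φ r)
    (hΦ' : ∀ s ∈ Icc (tp i) (tp N), Φ' s = 1 + ∫ r in (tp i)..s, C r * Φ' r) :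
    ∀ s ∈ Icc (tp i) (tp N), Φ s = Φ' s * Φ (tp i) := by
  obtain ⟨h1, h2⟩ := regular_of_matrix_volterra hC (hji.trans hiN) htp hΦ
  obtain ⟨h3, h4⟩ := regular_of_matrix_volterra (hC.mono hji) hiN htp hΦ'
  obtain ⟨K, hK, hCK⟩ := hC.exists_norm_le (hji.trans hiN)
  have hle := node_le_node htp hji hiN
  have hle' := node_le_node htp hiN le_rfl
  have key := eq_zero_of_abs_deriv_le_mul_abs_self_of_eq_zero_right
    (f := fun s => Φ s - Φ' s * Φ (tp i)) (f' := fun s => C s * (Φ s - Φ' s * Φ (tp i)))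
    (K := n * K) (a := tp i) (b := tp N)
    ((h1.mono (Icc_subset_Icc_left hle)).sub (continuousOn_matrix_mul h3 continuousOn_const))
    (fun s hs => ?_) ?_ (fun s hs => ?_)
  · exact fun s hs => sub_eq_zero.1 (key s hs)
  · have := (h2 s ⟨hle.trans hs.1, hs.2⟩).sub
      (hasDerivWithinAt_matrix_mul (h4 s hs) (hasDerivWithinAt_const s (Ici s) (Φ (tp i))))
    refine this.congr_deriv ?_
    rw [Matrix.mul_sub, Matrix.mul_zero, add_zero, Matrix.mul_assoc]
  · rw [hΦ' (tp i) (left_mem_Icc.2 hle')]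
    simp
  · refine (norm_matrix_mul_le _ _).trans ?_
    have := hCK s ⟨hle.trans hs.1, hs.2⟩
    gcongr

end MatrixVolterra

section Integral

variable {E F : Type*} [NormedAddCommGroup E] [NormedSpace ℝ E] [NormedAddCommGroup F]
  [NormedSpace ℝ F] {j N : ℕ} {tp : ℕ → ℝ} {f : ℝ → E}

lemma map_integral_of_piecewiseContinuous [FiniteDimensional ℝ E] [CompleteSpace F]
    (μ : E →ₗ[ℝ] F) (hf : PiecewiseContinuous j N tp f) (hjN : j ≤ N)
    (htp : ∀ k < N, tp k < tp (k + 1)) :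
    μ (∫ s in (tp j)..(tp N), f s) = ∫ s in (tp j)..(tp N), μ (f s) := by
  have : CompleteSpace E := FiniteDimensional.complete ℝ E
  exact ((LinearMap.toContinuousLinearMap μ).intervalIntegral_comp_comm
    (hf.intervalIntegrable hjN htp)).symm

lemma integral_sub_of_piecewiseContinuous {g : ℝ → E} (hf : PiecewiseContinuous j N tp f)
    (hg : PiecewiseContinuous j N tp g) (hjN : j ≤ N) (htp : ∀ k < N, tp k < tp (k + 1)) :
    ∫ s in (tp j)..(tp N), (f s - g s) =
      (∫ s in (tp j)..(tp N), f s) - ∫ s in (tp j)..(tp N), g s :=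
  intervalIntegral.integral_sub (hf.intervalIntegrable hjN htp) (hg.intervalIntegrable hjN htp)

lemma integral_succ_add_of_piecewiseContinuous (hf : PiecewiseContinuous j N tp f) (hjN : j < N)
    (htp : ∀ k < N, tp k < tp (k + 1)) :
    (∫ s in (tp j)..(tp (j + 1)), f s) + (∫ s in (tp (j + 1))..(tp N), f s) =
      ∫ s in (tp j)..(tp N), f s :=
  have h := fun i hi hiN => (⟨node_le_node htp hi hiN, node_le_node htp hiN le_rfl⟩ :
    tp i ∈ Icc (tp j) (tp N))
  have hint := fun {a b : ℝ} => hf.intervalIntegrable_of_mem hjN.le htp (a := a) (b := b)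
  intervalIntegral.integral_add_adjacent_intervals
    (hint (h j le_rfl hjN.le) (h (j + 1) j.le_succ hjN))
    (hint (h (j + 1) j.le_succ hjN) (h N hjN.le le_rfl))

lemma integral_succ_eq_sub_of_piecewiseContinuous [CompleteSpace E] {Z : ℝ → E}
    (hf : PiecewiseContinuous j N tp f) (hjN : j < N) (htp : ∀ k < N, tp k < tp (k + 1))
    (hZ : ContinuousOn Z (Icc (tp j) (tp (j + 1))))
    (hd : ∀ s ∈ Ioo (tp j) (tp (j + 1)), HasDerivWithinAt Z (f s) (Ioi s) s) :
    ∫ s in (tp j)..(tp (j + 1)), f s = Z (tp (j + 1)) - Z (tp j) :=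
  intervalIntegral.integral_eq_sub_of_hasDeriv_right_of_le (htp j hjN).le hZ hd
    (hf.intervalIntegrable_of_mem hjN.le htp
      ⟨le_rfl, node_le_node htp hjN.le le_rfl⟩
      ⟨(htp j hjN).le, node_le_node htp hjN le_rfl⟩)

end Integral

section MatrixIntegral

variable {n j N : ℕ} {tp : ℕ → ℝ} {f : ℝ → Matrix (Fin n) (Fin n) ℝ}

lemma transpose_mul_integral_mul (hf : PiecewiseContinuous j N tp f) (hjN : j ≤ N)
    (htp : ∀ k < N, tp k < tp (k + 1)) (u : Matrix (Fin n) (Fin n) ℝ) :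
    uᵀ * (∫ s in (tp j)..(tp N), f s) * u = ∫ s in (tp j)..(tp N), uᵀ * f s * u :=
  have : CompleteSpace (Matrix (Fin n) (Fin n) ℝ) := FiniteDimensional.complete ℝ _
  map_integral_of_piecewiseContinuous
    (LinearMap.mulRight ℝ u ∘ₗ LinearMap.mulLeft ℝ uᵀ) hf hjN htp

lemma posSemidef_integral (hf : PiecewiseContinuous j N tp f) (hjN : j ≤ N)
    (htp : ∀ k < N, tp k < tp (k + 1)) (h : ∀ s ∈ Icc (tp j) (tp N), (f s).PosSemidef) :
    (∫ s in (tp j)..(tp N), f s).PosSemidef := by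
  have hle := node_le_node htp hjN le_rfl
  have : CompleteSpace (Matrix (Fin n) (Fin n) ℝ) := FiniteDimensional.complete ℝ _
  refine posSemidef_iff_quadForm.2 ⟨?_, fun x => ?_⟩
  · have h1 : (∫ s in (tp j)..(tp N), f s)ᵀ = ∫ s in (tp j)..(tp N), (f s)ᵀ :=
      map_integral_of_piecewiseContinuous
        (Matrix.transposeLinearEquiv (Fin n) (Fin n) ℝ ℝ).toLinearMap hf hjN htp
    rw [h1]
    refine intervalIntegral.integral_congr fun s hs => ?_
    rw [uIcc_of_le hle] at hs
    exact (posSemidef_iff_quadForm.1 (h s hs)).1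
  · have h1 : quadForm x (∫ s in (tp j)..(tp N), f s) = ∫ s in (tp j)..(tp N), quadForm x (f s) :=
      map_integral_of_piecewiseContinuous (quadForm x).toLinearMap hf hjN htp
    rw [h1]
    exact intervalIntegral.integral_nonneg hle fun s hs => (posSemidef_iff_quadForm.1 (h s hs)).2 x

end MatrixIntegral

section Cost

variable {n N : ℕ} {tp : ℕ → ℝ}

/-- The cost matrix on `[t_i, t_N]` of running cost `W` and terminal cost `g` along `Φ`. -/
noncomputable def cost (N : ℕ) (tp : ℕ → ℝ) (i : ℕ) (Φ W : ℝ → Matrix (Fin n) (Fin n) ℝ)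
    (g : Matrix (Fin n) (Fin n) ℝ) : Matrix (Fin n) (Fin n) ℝ :=
  (Φ (tp N))ᵀ * g * Φ (tp N) + ∫ s in (tp i)..(tp N), (Φ s)ᵀ * W s * Φ s

lemma posSemidef_cost {i : ℕ} {Φ W : ℝ → Matrix (Fin n) (Fin n) ℝ}
    {g : Matrix (Fin n) (Fin n) ℝ} (hiN : i ≤ N) (htp : ∀ k < N, tp k < tp (k + 1))
    (hΦ : PiecewiseContinuous i N tp Φ) (hW : PiecewiseContinuous i N tp W)
    (hW0 : ∀ s ∈ Icc (tp i) (tp N), (W s).PosSemidef) (hg : g.PosSemidef) :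
    (cost N tp i Φ W g).PosSemidef :=
  (posSemidef_transpose_mul_mul hg _).add
    (posSemidef_integral ((hΦ.matrix_transpose.matrix_mul hW).matrix_mul hΦ) hiN htp
      fun s hs => posSemidef_transpose_mul_mul (hW0 s hs) _)

lemma cost_sub_cost {i : ℕ} {Φ W W' : ℝ → Matrix (Fin n) (Fin n) ℝ}
    {g g' : Matrix (Fin n) (Fin n) ℝ} (hiN : i ≤ N) (htp : ∀ k < N, tp k < tp (k + 1))
    (hΦ : PiecewiseContinuous i N tp Φ) (hW : PiecewiseContinuous i N tp W)
    (hW' : PiecewiseContinuous i N tp W') :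
    cost N tp i Φ W g - cost N tp i Φ W' g' = cost N tp i Φ (fun s => W s - W' s) (g - g') := by
  have h := integral_sub_of_piecewiseContinuous
    ((hΦ.matrix_transpose.matrix_mul hW).matrix_mul hΦ)
    ((hΦ.matrix_transpose.matrix_mul hW').matrix_mul hΦ) hiN htp
  simp only [cost, Matrix.mul_sub, Matrix.sub_mul]
  rw [h]
  abel

/-- A solution `P` of a piecewise linear Lyapunov equation with closed-loop coefficient `C`,
running costs `W k` and terminal costs `g k`, whose left limit at each node is the cost of
continuing with the data frozen at the previous node. -/
structure IsPiecewiseLyapunov (N : ℕ) (tp : ℕ → ℝ) (C : ℝ → Matrix (Fin n) (Fin n) ℝ)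
    (W : ℕ → ℝ → Matrix (Fin n) (Fin n) ℝ) (g : ℕ → Matrix (Fin n) (Fin n) ℝ)
    (Φ : ℕ → ℝ → Matrix (Fin n) (Fin n) ℝ) (P : ℝ → Matrix (Fin n) (Fin n) ℝ) : Prop where
  lt_succ : ∀ k < N, tp k < tp (k + 1)
  coeff : PiecewiseContinuous 0 N tp C
  running : ∀ k < N, PiecewiseContinuous k N tp (W k)
  continuousOn : ∀ k < N, ContinuousOn P (Ico (tp k) (tp (k + 1)))
  hasDerivAt : ∀ k < N, ∀ s ∈ Ioo (tp k) (tp (k + 1)),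
    HasDerivAt P (-(P s * C s + (C s)ᵀ * P s + W k s)) s
  volterra : ∀ k ≤ N, ∀ s ∈ Icc (tp k) (tp N),
    Φ k s = 1 + ∫ r in (tp k)..s, C r * Φ k r
  tendsto : ∀ k < N, Tendsto P (𝓝[<] tp (k + 1)) (𝓝 (cost N tp (k + 1) (Φ (k + 1)) (W k) (g k)))
  final : P (tp N) = g (N - 1)
  posSemidef_running : ∀ k < N, ∀ s ∈ Icc (tp k) (tp N), (W k s).PosSemidef
  posSemidef_terminal : ∀ k < N, (g k).PosSemidef
  running_mono : ∀ k, k + 1 < N → ∀ s ∈ Icc (tp (k + 1)) (tp N),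
    (W (k + 1) s - W k s).PosSemidef
  terminal_mono : ∀ k, k + 1 < N → (g (k + 1) - g k).PosSemidef

namespace IsPiecewiseLyapunov

variable {C : ℝ → Matrix (Fin n) (Fin n) ℝ} {W : ℕ → ℝ → Matrix (Fin n) (Fin n) ℝ}
  {g : ℕ → Matrix (Fin n) (Fin n) ℝ} {Φ : ℕ → ℝ → Matrix (Fin n) (Fin n) ℝ}
  {P : ℝ → Matrix (Fin n) (Fin n) ℝ}

lemma regular (h : IsPiecewiseLyapunov N tp C W g Φ P) {k : ℕ} (hk : k ≤ N) :
    ContinuousOn (Φ k) (Icc (tp k) (tp N)) ∧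
      ∀ s ∈ Ico (tp k) (tp N), HasDerivWithinAt (Φ k) (C s * Φ k s) (Ici s) s :=
  regular_of_matrix_volterra (h.coeff.mono k.zero_le) hk h.lt_succ (h.volterra k hk)

lemma piecewiseContinuous (h : IsPiecewiseLyapunov N tp C W g Φ P) {k : ℕ} (hk : k ≤ N) :
    PiecewiseContinuous k N tp (Φ k) :=
  .of_continuousOn h.lt_succ (h.regular hk).1

lemma apply_node (h : IsPiecewiseLyapunov N tp C W g Φ P) {k : ℕ} (hk : k ≤ N) :
    Φ k (tp k) = 1 := by
  rw [h.volterra k hk _ (left_mem_Icc.2 (node_le_node h.lt_succ hk le_rfl)),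
    intervalIntegral.integral_same, add_zero]

lemma posSemidef_leftLimit (h : IsPiecewiseLyapunov N tp C W g Φ P) {k : ℕ} (hk : k < N) :
    (cost N tp (k + 1) (Φ (k + 1)) (W k) (g k)).PosSemidef :=
  posSemidef_cost hk h.lt_succ (h.piecewiseContinuous hk) ((h.running k hk).mono k.le_succ)
    (fun s hs => h.posSemidef_running k hk s ⟨(h.lt_succ k hk).le.trans hs.1, hs.2⟩)
    (h.posSemidef_terminal k hk)

lemma tendsto_node_right (h : IsPiecewiseLyapunov N tp C W g Φ P) {k : ℕ} (hk : k < N) :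
    Tendsto P (𝓝[>] tp k) (𝓝 (P (tp k))) := by
  refine Tendsto.mono_left (h.continuousOn k hk _ (left_mem_Ico.2 (h.lt_succ k hk))) ?_
  rw [← nhdsWithin_Ioo_eq_nhdsGT (h.lt_succ k hk)]
  exact nhdsWithin_mono _ Ioo_subset_Ico_self

/-- The value of `P` at a node is the cost of continuing with the data frozen there. -/
lemma apply_eq_cost (h : IsPiecewiseLyapunov N tp C W g Φ P) {k : ℕ} (hk : k < N) :
    P (tp k) = cost N tp k (Φ k) (W k) (g k) := by
  have hlt := h.lt_succ k hk
  have hleN := node_le_node h.lt_succ (Nat.succ_le_of_lt hk) le_rfl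
  set p := cost N tp (k + 1) (Φ (k + 1)) (W k) (g k) with hp
  set U := Φ k (tp (k + 1)) with hU
  have hcomp := volterra_comp (h.coeff.mono k.zero_le) k.le_succ hk h.lt_succ
    (h.volterra k hk.le) (h.volterra (k + 1) hk)
  have hf : PiecewiseContinuous k N tp fun s => (Φ k s)ᵀ * W k s * Φ k s :=
    ((h.piecewiseContinuous hk.le).matrix_transpose.matrix_mul (h.running k hk)).matrix_mul
      (h.piecewiseContinuous hk.le)
  have hf' : PiecewiseContinuous (k + 1) N tp fun s => (Φ (k + 1) s)ᵀ * W k s * Φ (k + 1) s :=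
    ((h.piecewiseContinuous hk).matrix_transpose.matrix_mul
      ((h.running k hk).mono k.le_succ)).matrix_mul (h.piecewiseContinuous hk)
  set Pc := Function.update P (tp (k + 1)) p with hPc
  have hPcc : ContinuousOn Pc (Icc (tp k) (tp (k + 1))) :=
    continuousOn_update_right (h.continuousOn k hk) (h.tendsto k hk)
  have hΦc := (h.regular hk.le).1.mono (Icc_subset_Icc_right hleN)
  have hftc := integral_succ_eq_sub_of_piecewiseContinuous
    (Z := fun s => -((Φ k s)ᵀ * Pc s * Φ k s)) hf hk h.lt_succ
    (continuousOn_matrix_mul (continuousOn_matrix_mul (continuousOn_matrix_transpose hΦc) hPcc)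
      hΦc).neg (fun s hs => ?_)
  · have hadd := integral_succ_add_of_piecewiseContinuous hf hk h.lt_succ
    have htail : ∫ s in (tp (k + 1))..(tp N), (Φ k s)ᵀ * W k s * Φ k s =
        Uᵀ * (∫ s in (tp (k + 1))..(tp N), (Φ (k + 1) s)ᵀ * W k s * Φ (k + 1) s) * U := by
      rw [transpose_mul_integral_mul hf' hk h.lt_succ U]
      refine intervalIntegral.integral_congr fun s hs => ?_
      rw [uIcc_of_le hleN] at hs
      simp only [hcomp s hs, Matrix.transpose_mul, Matrix.mul_assoc, hU]
    have hPk : Pc (tp k) = P (tp k) := Function.update_of_ne hlt.ne _ _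
    have hPk' : Pc (tp (k + 1)) = p := Function.update_self _ _ _
    simp only [hPk, hPk', h.apply_node hk.le, ← hU, Matrix.transpose_one, Matrix.one_mul,
      Matrix.mul_one, sub_neg_eq_add] at hftc
    rw [cost, ← hadd, hftc, htail, hcomp (tp N) ⟨hleN, le_rfl⟩, hp, cost]
    simp only [Matrix.transpose_mul, Matrix.mul_add, Matrix.add_mul, Matrix.mul_assoc, ← hU]
    abel
  · have hΦd := ((h.regular hk.le).2 s ⟨hs.1.le, hs.2.trans_le hleN⟩).mono Ioi_subset_Ici_self
    have hPd : HasDerivWithinAt Pc (-(P s * C s + (C s)ᵀ * P s + W k s)) (Ioi s) s := by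
      refine ((h.hasDerivAt k hk s hs).congr_of_eventuallyEq ?_).hasDerivWithinAt
      filter_upwards [Iio_mem_nhds hs.2] with r hr using Function.update_of_ne (ne_of_lt hr) _ _
    have hPs : Pc s = P s := Function.update_of_ne hs.2.ne _ _
    refine (hasDerivWithinAt_matrix_mul (hasDerivWithinAt_matrix_mul
      (hasDerivWithinAt_matrix_transpose hΦd) hPd) hΦd).neg.congr_deriv ?_
    rw [hPs, Matrix.transpose_mul]
    noncomm_ring

lemma posSemidef_jump (h : IsPiecewiseLyapunov N tp C W g Φ P) {k : ℕ} (hk : k < N) :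
    (P (tp (k + 1)) - cost N tp (k + 1) (Φ (k + 1)) (W k) (g k)).PosSemidef := by
  rcases (Nat.succ_le_of_lt hk).eq_or_lt with rfl | hk'
  · have : P (tp (k + 1)) - cost (k + 1) tp (k + 1) (Φ (k + 1)) (W k) (g k) = 0 := by
      rw [cost, intervalIntegral.integral_same, h.final]
      simp [h.apply_node le_rfl]
    rw [this]
    exact Matrix.PosSemidef.zero
  · rw [h.apply_eq_cost hk', cost_sub_cost hk h.lt_succ (h.piecewiseContinuous hk)
      (h.running (k + 1) hk') ((h.running k hk).mono k.le_succ)]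
    exact posSemidef_cost hk h.lt_succ (h.piecewiseContinuous hk)
      ((h.running (k + 1) hk').sub ((h.running k hk).mono k.le_succ))
      (h.running_mono k hk') (h.terminal_mono k hk')

lemma posSemidef (h : IsPiecewiseLyapunov N tp C W g Φ P) (hN : 0 < N) :
    ∀ t ∈ Icc (tp 0) (tp N), (P t).PosSemidef := by
  obtain ⟨K, _, hK⟩ := h.coeff.exists_norm_le N.zero_le
  have hIoo : ∀ k < N, ∀ t ∈ Ioo (tp k) (tp (k + 1)), (P t).PosSemidef := by
    intro k hk
    refine posSemidef_of_lyapunov (M := C) (C := K) (h.hasDerivAt k hk) (fun t ht => ?_)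
      (fun t ht => ?_) (h.tendsto k hk) (h.posSemidef_leftLimit hk)
    · have := h.posSemidef_running k hk t
        ⟨ht.1.le, ht.2.le.trans (node_le_node h.lt_succ (Nat.succ_le_of_lt hk) le_rfl)⟩
      convert this using 1
      abel
    · exact hK t ⟨(node_le_node h.lt_succ k.zero_le hk.le).trans ht.1.le,
        ht.2.trans_le (node_le_node h.lt_succ (Nat.succ_le_of_lt hk) le_rfl)⟩
  intro t ht
  rcases ht.2.eq_or_lt with rfl | htN
  · rw [h.final]
    exact h.posSemidef_terminal _ (by omega)
  · obtain ⟨k, -, hk, htk⟩ := exists_mem_Ico_of_mem_Ico N.zero_le ⟨ht.1, htN⟩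
    rcases htk.1.eq_or_lt with rfl | hlt
    · refine posSemidef_of_tendsto (h.tendsto_node_right hk) ?_
      filter_upwards [Ioo_mem_nhdsGT htk.2] with r hr using hIoo k hk r hr
    · exact hIoo k hk t ⟨hlt, htk.2⟩

/-- Comparison of `P` with continuous supersolutions of a Lyapunov equation; the upward jumps
of `P` at the nodes are harmless since time runs backwards. -/
lemma posSemidef_sub (h : IsPiecewiseLyapunov N tp C W g Φ P)
    {A X D' : ℝ → Matrix (Fin n) (Fin n) ℝ} (hA : PiecewiseContinuous 0 N tp A)
    (hX : ContinuousOn X (Icc (tp 0) (tp N)))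
    (hd : ∀ k < N, ∀ s ∈ Ioo (tp k) (tp (k + 1)), HasDerivAt (fun s => X s - P s) (D' s) s)
    (hD : ∀ k < N, ∀ s ∈ Ioo (tp k) (tp (k + 1)),
      (-(D' s + (X s - P s) * A s + (A s)ᵀ * (X s - P s))).PosSemidef)
    (hend : (X (tp N) - g (N - 1)).PosSemidef) :
    ∀ t ∈ Icc (tp 0) (tp N), (X t - P t).PosSemidef := by
  obtain ⟨K, _, hK⟩ := hA.exists_norm_le N.zero_le
  have hmem : ∀ k ≤ N, tp k ∈ Icc (tp 0) (tp N) := fun k hk =>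
    ⟨node_le_node h.lt_succ k.zero_le hk, node_le_node h.lt_succ hk le_rfl⟩
  have hIoo : ∀ k < N, (X (tp (k + 1)) - P (tp (k + 1))).PosSemidef →
      ∀ t ∈ Ioo (tp k) (tp (k + 1)), (X t - P t).PosSemidef := by
    intro k hk hnode
    have hXlim : Tendsto X (𝓝[<] tp (k + 1)) (𝓝 (X (tp (k + 1)))) := by
      refine Tendsto.mono_left (hX _ (hmem (k + 1) hk)) ?_
      rw [← nhdsWithin_Ioo_eq_nhdsLT (h.lt_succ k hk)]
      exact nhdsWithin_mono _ fun r hr =>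
        ⟨(hmem k hk.le).1.trans hr.1.le, hr.2.le.trans (hmem (k + 1) hk).2⟩
    refine posSemidef_of_lyapunov (M := A) (C := K) (hd k hk) (hD k hk) (fun t ht => ?_)
      (hXlim.sub (h.tendsto k hk)) ?_
    · exact hK t ⟨(hmem k hk.le).1.trans ht.1.le, ht.2.trans_le (hmem (k + 1) hk).2⟩
    · have := hnode.add (h.posSemidef_jump hk)
      rwa [sub_add_sub_cancel] at this
  have hnode : ∀ k ≤ N, (X (tp k) - P (tp k)).PosSemidef := by
    intro k hk
    induction hk using Nat.decreasingInduction with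
    | self => rwa [h.final]
    | of_succ k hk ih =>
      have hXlim : Tendsto X (𝓝[>] tp k) (𝓝 (X (tp k))) := by
        refine Tendsto.mono_left (hX _ (hmem k hk.le)) ?_
        rw [← nhdsWithin_Ioo_eq_nhdsGT (h.lt_succ k hk)]
        exact nhdsWithin_mono _ fun r hr =>
          ⟨(hmem k hk.le).1.trans hr.1.le, hr.2.le.trans (hmem (k + 1) hk).2⟩
      refine posSemidef_of_tendsto (hXlim.sub (h.tendsto_node_right hk)) ?_
      filter_upwards [Ioo_mem_nhdsGT (h.lt_succ k hk)] with r hr using hIoo k hk ih r hr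
  intro t ht
  rcases ht.2.eq_or_lt with rfl | htN
  · exact hnode N le_rfl
  · obtain ⟨k, -, hk, htk⟩ := exists_mem_Ico_of_mem_Ico N.zero_le ⟨ht.1, htN⟩
    rcases htk.1.eq_or_lt with rfl | hlt
    · exact hnode k hk.le
    · exact hIoo k hk (hnode (k + 1) hk) t ⟨hlt, htk.2⟩

end IsPiecewiseLyapunov

end Cost

section Frozen

variable {E : Type*} {N : ℕ} {T : ℝ} {tp : ℕ → ℝ}

lemma node_mem_Icc (hp : IsPartition T N tp) {k : ℕ} (hk : k ≤ N) : tp k ∈ Icc 0 T := by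
  obtain ⟨-, h0, hT, htp⟩ := hp
  exact ⟨h0 ▸ node_le_node htp k.zero_le hk, hT ▸ node_le_node htp hk le_rfl⟩

lemma continuousOn_slice [TopologicalSpace E] {F : ℝ → ℝ → E}
    (hF : ContinuousOn (fun p : ℝ × ℝ => F p.1 p.2) (Icc 0 T ×ˢ Icc 0 T)) {t : ℝ}
    (ht : t ∈ Icc 0 T) : ContinuousOn (F t) (Icc 0 T) :=
  hF.comp (f := fun s => (t, s)) (by fun_prop) fun _ hs => ⟨ht, hs⟩

lemma piecewiseContinuous_slice [TopologicalSpace E] {F : ℝ → ℝ → E} (hp : IsPartition T N tp)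
    (hF : ContinuousOn (fun p : ℝ × ℝ => F p.1 p.2) (Icc 0 T ×ˢ Icc 0 T)) {t : ℝ}
    (ht : t ∈ Icc 0 T) (k : ℕ) (hk : k ≤ N) : PiecewiseContinuous k N tp (F t) :=
  .of_continuousOn hp.2.2.2 ((continuousOn_slice hF ht).mono
    (Icc_subset_Icc (node_mem_Icc hp hk).1 (node_mem_Icc hp le_rfl).2))

lemma piecewiseContinuous_of_frozen [TopologicalSpace E] {F : ℝ → ℝ → E} {FΔ : ℝ → E}
    (hp : IsPartition T N tp)
    (hF : ContinuousOn (fun p : ℝ × ℝ => F p.1 p.2) (Icc 0 T ×ˢ Icc 0 T))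
    (hΔ : ∀ k < N, ∀ s ∈ Ico (tp k) (tp (k + 1)), FΔ s = F (tp k) s) :
    PiecewiseContinuous 0 N tp FΔ := fun k _ hk =>
  ⟨F (tp k), (continuousOn_slice hF (node_mem_Icc hp hk.le)).mono
    (Icc_subset_Icc (node_mem_Icc hp hk.le).1 (node_mem_Icc hp hk).2), hΔ k hk⟩

lemma piecewiseContinuous_of_tendsto [TopologicalSpace E] {f : ℝ → E}
    (hf : ∀ k < N, ContinuousOn f (Ico (tp k) (tp (k + 1))))
    (hl : ∀ k < N, ∃ l, Tendsto f (𝓝[<] tp (k + 1)) (𝓝 l)) : PiecewiseContinuous 0 N tp f := by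
  intro k _ hk
  obtain ⟨l, hl⟩ := hl k hk
  refine ⟨Function.update f (tp (k + 1)) l, continuousOn_update_right (hf k hk) hl, fun s hs => ?_⟩
  exact (Function.update_of_ne hs.2.ne _ _).symm

lemma hasDerivAt_of_backward_integral {E : Type*} [NormedAddCommGroup E] [NormedSpace ℝ E]
    [FiniteDimensional ℝ E] {f X : ℝ → E} {X₀ : E} (htp : ∀ k < N, tp k < tp (k + 1))
    (hf : PiecewiseContinuous 0 N tp f)
    (hX : ∀ s ∈ Icc (tp 0) (tp N), X s = X₀ + ∫ r in s..(tp N), f r) {k : ℕ} (hk : k < N) {s : ℝ}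
    (hs : s ∈ Ioo (tp k) (tp (k + 1))) : HasDerivAt X (-f s) s := by
  have : CompleteSpace E := FiniteDimensional.complete ℝ E
  have h0 := node_le_node htp k.zero_le hk.le
  have hN := node_le_node htp (Nat.succ_le_of_lt hk) le_rfl
  have hs' : s ∈ Icc (tp 0) (tp N) := ⟨h0.trans hs.1.le, hs.2.le.trans hN⟩
  have hmeas : StronglyMeasurableAtFilter f (𝓝 s) volume := by
    refine ⟨Ioc (tp 0) (tp N), Ioc_mem_nhds (h0.trans_lt hs.1) (hs.2.trans_le hN), ?_⟩
    exact (hf.intervalIntegrable N.zero_le htp).1.aestronglyMeasurable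
  have h := intervalIntegral.integral_hasDerivAt_left
    (hf.intervalIntegrable_of_mem N.zero_le htp hs'
      (right_mem_Icc.2 (node_le_node htp N.zero_le le_rfl)))
    hmeas (hf.continuousAt k.zero_le hk hs)
  refine (h.const_add X₀).congr_of_eventuallyEq ?_
  filter_upwards [Icc_mem_nhds (h0.trans_lt hs.1) (hs.2.trans_le hN)] with r hr using hX r hr

end Frozen

section Riccati

variable {n m N : ℕ} {T δ : ℝ} {tp : ℕ → ℝ}

/-- The standing assumptions on the coefficients that enter the bounds. -/
structure IsAdmissible (T δ : ℝ) (A : ℝ → ℝ → Matrix (Fin n) (Fin n) ℝ)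
    (B : ℝ → ℝ → Matrix (Fin n) (Fin m) ℝ) (Q : ℝ → ℝ → Matrix (Fin n) (Fin n) ℝ)
    (R : ℝ → ℝ → Matrix (Fin m) (Fin m) ℝ) (G : ℝ → Matrix (Fin n) (Fin n) ℝ) : Prop where
  pos : 0 < δ
  continuousOn_A : ContinuousOn (fun p : ℝ × ℝ => A p.1 p.2) (Icc 0 T ×ˢ Icc 0 T)
  continuousOn_B : ContinuousOn (fun p : ℝ × ℝ => B p.1 p.2) (Icc 0 T ×ˢ Icc 0 T)
  continuousOn_Q : ContinuousOn (fun p : ℝ × ℝ => Q p.1 p.2) (Icc 0 T ×ˢ Icc 0 T)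
  continuousOn_R : ContinuousOn (fun p : ℝ × ℝ => R p.1 p.2) (Icc 0 T ×ˢ Icc 0 T)
  posSemidef_Q : ∀ t ∈ Icc (0 : ℝ) T, ∀ s ∈ Icc (0 : ℝ) T, (Q t s).PosSemidef
  posSemidef_G : ∀ t ∈ Icc (0 : ℝ) T, (G t).PosSemidef
  coercive_R : ∀ t ∈ Icc (0 : ℝ) T, ∀ s ∈ Icc (0 : ℝ) T,
    (R t s - δ • (1 : Matrix (Fin m) (Fin m) ℝ)).PosSemidef
  mono_G : ∀ t r : ℝ, 0 ≤ t → t ≤ r → r ≤ T → (G r - G t).PosSemidef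
  mono_Q : ∀ t r s : ℝ, 0 ≤ t → t ≤ r → r ≤ s → s ≤ T → (Q r s - Q t s).PosSemidef
  mono_R : ∀ t r s : ℝ, 0 ≤ t → t ≤ r → r ≤ s → s ≤ T → (R r s - R t s).PosSemidef

variable {A : ℝ → ℝ → Matrix (Fin n) (Fin n) ℝ} {B : ℝ → ℝ → Matrix (Fin n) (Fin m) ℝ}
  {Q : ℝ → ℝ → Matrix (Fin n) (Fin n) ℝ} {R : ℝ → ℝ → Matrix (Fin m) (Fin m) ℝ}
  {G : ℝ → Matrix (Fin n) (Fin n) ℝ} {AΔ : ℝ → Matrix (Fin n) (Fin n) ℝ}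
  {BΔ : ℝ → Matrix (Fin n) (Fin m) ℝ} {QΔ : ℝ → Matrix (Fin n) (Fin n) ℝ}
  {RΔ : ℝ → Matrix (Fin m) (Fin m) ℝ} {P : ℝ → Matrix (Fin n) (Fin n) ℝ}
  {Φ : ℕ → ℝ → Matrix (Fin n) (Fin n) ℝ}

lemma IsAdmissible.posDef_R (h : IsAdmissible T δ A B Q R G) {t s : ℝ} (ht : t ∈ Icc 0 T)
    (hs : s ∈ Icc 0 T) : (R t s).PosDef := by
  have := Matrix.PosDef.posSemidef_add (h.coercive_R t ht s hs) (Matrix.PosDef.one.smul h.pos)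
  rwa [sub_add_cancel] at this

lemma isPiecewiseLyapunov_of_isPiecewiseRiccati (h : IsAdmissible T δ A B Q R G)
    (hp : IsPartition T N tp) (hfr : IsFrozen n m N tp A B Q R AΔ BΔ QΔ RΔ)
    (hP : IsPiecewiseRiccati n m N T tp Q R G AΔ BΔ QΔ RΔ P Φ) :
    IsPiecewiseLyapunov N tp (fun s => AΔ s - BΔ s * (RΔ s)⁻¹ * (BΔ s)ᵀ * P s)
      (fun k s => Q (tp k) s
        + ((RΔ s)⁻¹ * (BΔ s)ᵀ * P s)ᵀ * R (tp k) s * ((RΔ s)⁻¹ * (BΔ s)ᵀ * P s))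
      (fun k => G (tp k)) Φ P := by
  obtain ⟨hPc, hPT, hPd, hPΦ, hPl⟩ := hP
  have hnode := fun {k : ℕ} => node_mem_Icc hp (k := k)
  have hmem : ∀ k < N, ∀ s ∈ Icc (tp k) (tp N), s ∈ Icc 0 T := fun k hk s hs =>
    ⟨(hnode hk.le).1.trans hs.1, hs.2.trans (hnode le_rfl).2⟩
  have htp := hp.2.2.2
  obtain rfl : tp N = T := hp.2.2.1
  have hpcA := piecewiseContinuous_of_frozen hp h.continuousOn_A fun k hk s hs => (hfr k hk s hs).1
  have hpcB := piecewiseContinuous_of_frozen hp h.continuousOn_B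
    fun k hk s hs => (hfr k hk s hs).2.1
  have hpcR : PiecewiseContinuous 0 N tp fun s => (RΔ s)⁻¹ := by
    intro k _ hk
    refine ⟨fun s => (R (tp k) s)⁻¹, fun s hs => ?_, fun s hs => ?_⟩
    · have hs' : s ∈ Icc 0 (tp N) := ⟨(hnode hk.le).1.trans hs.1, hs.2.trans (hnode hk).2⟩
      have h1 := (continuousOn_slice h.continuousOn_R (hnode hk.le)).mono
        (Icc_subset_Icc (hnode hk.le).1 (hnode hk).2) s hs
      have h2 := (h.posDef_R (hnode hk.le) hs').det_pos.ne'
      exact (continuousAt_matrix_inv _ (by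
        rw [Ring.inverse_eq_inv']; exact continuousAt_inv₀ h2)).comp_continuousWithinAt h1
    · simp only [(hfr k hk s hs).2.2.2]
  have hpcP : PiecewiseContinuous 0 N tp P :=
    piecewiseContinuous_of_tendsto hPc fun k hk => ⟨_, hPl (k + 1) k.succ_pos hk⟩
  have hpcK := (hpcR.matrix_mul hpcB.matrix_transpose).matrix_mul hpcP
  refine
    { lt_succ := htp
      coeff := hpcA.sub (((hpcB.matrix_mul hpcR).matrix_mul hpcB.matrix_transpose).matrix_mul hpcP)
      running := fun k hk => ?_
      continuousOn := hPc
      hasDerivAt := fun k hk s hs => ?_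
      volterra := hPΦ
      tendsto := fun k hk => ?_
      final := hPT
      posSemidef_running := fun k hk s hs => ?_
      posSemidef_terminal := fun k hk => h.posSemidef_G _ (hnode hk.le)
      running_mono := fun k hk s hs => ?_
      terminal_mono := fun k hk => h.mono_G _ _ (hnode (by omega)).1 (htp k (by omega)).le
        (hnode hk.le).2 }
  · exact (piecewiseContinuous_slice hp h.continuousOn_Q (hnode hk.le) k hk.le).add
      (((hpcK.mono k.zero_le).matrix_transpose.matrix_mul
        (piecewiseContinuous_slice hp h.continuousOn_R (hnode hk.le) k hk.le)).matrix_mul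
          (hpcK.mono k.zero_le))
  · obtain ⟨-, -, hQs, hRs⟩ := hfr k hk s (Ioo_subset_Ico_self hs)
    have hpd : (R (tp k) s).PosDef := h.posDef_R (hnode hk.le)
      ⟨(hnode hk.le).1.trans hs.1.le, hs.2.le.trans (hnode hk).2⟩
    have hinv : ((R (tp k) s)⁻¹)ᵀ = (R (tp k) s)⁻¹ :=
      (posSemidef_iff_quadForm.1 hpd.posSemidef.inv).1
    have hone : R (tp k) s * (R (tp k) s)⁻¹ = 1 :=
      Matrix.mul_nonsing_inv _ hpd.det_pos.ne'.isUnit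
    refine (hPd k hk s hs).congr_deriv ?_
    rw [hQs, hRs]
    have hK : ((R (tp k) s)⁻¹ * (BΔ s)ᵀ * P s)ᵀ * R (tp k) s * ((R (tp k) s)⁻¹ * (BΔ s)ᵀ * P s)
        = (P s)ᵀ * BΔ s * (R (tp k) s)⁻¹ * (BΔ s)ᵀ * P s := by
      simp only [Matrix.transpose_mul, Matrix.transpose_transpose, hinv, Matrix.mul_assoc]
      rw [← Matrix.mul_assoc (R (tp k) s), hone, Matrix.one_mul]
    rw [hK]
    simp only [Matrix.transpose_sub, Matrix.transpose_mul, Matrix.transpose_transpose, hinv,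
      Matrix.mul_sub, Matrix.sub_mul, Matrix.mul_assoc]
    abel
  · have hl := hPl (k + 1) k.succ_pos hk
    rw [Nat.add_sub_cancel] at hl
    simp only [cost]
    convert hl using 4
    funext s
    simp only [Matrix.mul_add, Matrix.add_mul, Matrix.transpose_mul, Matrix.mul_assoc]
  · exact (h.posSemidef_Q _ (hnode hk.le) s (hmem k hk s hs)).add
      (posSemidef_transpose_mul_mul (h.posDef_R (hnode hk.le) (hmem k hk s hs)).posSemidef _)
  · have h1 := h.mono_Q (tp k) (tp (k + 1)) s (hnode (by omega)).1 (htp k (by omega)).le hs.1 hs.2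
    have h2 := h.mono_R (tp k) (tp (k + 1)) s (hnode (by omega)).1 (htp k (by omega)).le hs.1 hs.2
    have h3 := h1.add (posSemidef_transpose_mul_mul h2 ((RΔ s)⁻¹ * (BΔ s)ᵀ * P s))
    convert h3 using 1
    rw [Matrix.mul_sub, Matrix.sub_mul]
    abel

/-- Comparison of the piecewise Riccati function with supersolutions of the Lyapunov equation. -/
lemma posSemidef_sub_of_supersolution (h : IsAdmissible T δ A B Q R G)
    (hp : IsPartition T N tp) (hfr : IsFrozen n m N tp A B Q R AΔ BΔ QΔ RΔ)
    (hP : IsPiecewiseRiccati n m N T tp Q R G AΔ BΔ QΔ RΔ P Φ)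
    {X X' : ℝ → Matrix (Fin n) (Fin n) ℝ} (hX : ContinuousOn X (Icc 0 T))
    (hd : ∀ k < N, ∀ s ∈ Ioo (tp k) (tp (k + 1)), HasDerivAt X (X' s) s)
    (hX' : ∀ k < N, ∀ s ∈ Ioo (tp k) (tp (k + 1)),
      (-(X' s + X s * AΔ s + (AΔ s)ᵀ * X s + QΔ s)).PosSemidef)
    (hend : (X T - G (tp (N - 1))).PosSemidef) :
    ∀ t ∈ Icc 0 T, (X t - P t).PosSemidef := by
  have hL := isPiecewiseLyapunov_of_isPiecewiseRiccati h hp hfr hP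
  have hP0 := hL.posSemidef hp.1
  have hnode := fun {k : ℕ} => node_mem_Icc hp (k := k)
  have h0 : tp 0 = 0 := hp.2.1
  obtain rfl : tp N = T := hp.2.2.1
  rw [← h0] at hX ⊢
  refine hL.posSemidef_sub (A := AΔ) (piecewiseContinuous_of_frozen hp h.continuousOn_A
    fun k hk s hs => (hfr k hk s hs).1) hX
    (fun k hk s hs => (hd k hk s hs).sub (hP.2.2.1 k hk s hs)) (fun k hk s hs => ?_) hend
  have hs' : s ∈ Icc 0 (tp N) :=
    ⟨(hnode hk.le).1.trans hs.1.le, hs.2.le.trans (hnode hk).2⟩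
  have hinv : ((RΔ s)⁻¹).PosSemidef := by
    rw [(hfr k hk s (Ioo_subset_Ico_self hs)).2.2.2]
    exact (h.posDef_R (hnode hk.le) hs').posSemidef.inv
  have hPs : (P s)ᵀ = P s := (posSemidef_iff_quadForm.1 (hP0 s (by rwa [h0]))).1
  have key := (hX' k hk s hs).add (posSemidef_transpose_mul_mul hinv ((BΔ s)ᵀ * P s))
  convert key using 1
  rw [Matrix.transpose_mul, Matrix.transpose_transpose, hPs]
  simp only [Matrix.mul_sub, Matrix.sub_mul, Matrix.mul_assoc]
  abel

/-- A scalar supersolution, giving an explicit bound in terms of bounds on `A`, `Q` and `G`. -/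
lemma norm_le_of_isPiecewiseRiccati (h : IsAdmissible T δ A B Q R G) {a q γ : ℝ}
    (ha : ∀ t ∈ Icc 0 T, ∀ s ∈ Icc 0 T, ‖A t s‖ ≤ a)
    (hq : ∀ t ∈ Icc 0 T, ∀ s ∈ Icc 0 T, ‖Q t s‖ ≤ q) (hγ : ∀ t ∈ Icc 0 T, ‖G t‖ ≤ γ)
    (hp : IsPartition T N tp) (hfr : IsFrozen n m N tp A B Q R AΔ BΔ QΔ RΔ)
    (hP : IsPiecewiseRiccati n m N T tp Q R G AΔ BΔ QΔ RΔ P Φ) :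
    ∀ t ∈ Icc 0 T, ‖P t‖ ≤ (n * q + n * γ) * Real.exp ((2 * n * a + 1) * T) := by
  have hnode := fun {k : ℕ} => node_mem_Icc hp (k := k)
  have h0mem : (0 : ℝ) ∈ Icc 0 T := hp.2.1 ▸ hnode N.zero_le
  have ha0 : 0 ≤ a := (norm_nonneg _).trans (ha 0 h0mem 0 h0mem)
  have hq0 : 0 ≤ q := (norm_nonneg _).trans (hq 0 h0mem 0 h0mem)
  have hγ0 : 0 ≤ γ := (norm_nonneg _).trans (hγ 0 h0mem)
  set c : ℝ := 2 * n * a + 1 with hc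
  set κ : ℝ := n * q + n * γ with hκ
  have hc0 : 0 ≤ c := by positivity
  have hκ0 : 0 ≤ κ := by positivity
  set f : ℝ → ℝ := fun t => κ * Real.exp (c * (T - t)) with hf
  have hfd : ∀ t, HasDerivAt f (-(c * f t)) t := fun t => by
    have h1 := (((hasDerivAt_id t).const_sub T).const_mul c).exp.const_mul κ
    refine h1.congr_deriv ?_
    simp only [hf, id]
    ring
  have hXd : ∀ t, HasDerivAt (fun t => f t • (1 : Matrix (Fin n) (Fin n) ℝ))
      ((-(c * f t)) • (1 : Matrix (Fin n) (Fin n) ℝ)) t := fun t => (hfd t).smul_const _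
  have hL := isPiecewiseLyapunov_of_isPiecewiseRiccati h hp hfr hP
  have hle := posSemidef_sub_of_supersolution h hp hfr hP
    (X := fun t => f t • (1 : Matrix (Fin n) (Fin n) ℝ))
    (X' := fun t => (-(c * f t)) • (1 : Matrix (Fin n) (Fin n) ℝ))
    (fun t _ => (hXd t).continuousAt.continuousWithinAt) (fun _ _ s _ => hXd s)
    (fun k hk s hs => ?_) ?_
  · intro t ht
    have hP0 : (P t).PosSemidef := hL.posSemidef hp.1 t (by rwa [hp.2.1, hp.2.2.1])
    refine (norm_le_of_posSemidef_of_le (by positivity) hP0 (hle t ht)).trans ?_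
    have : T - t ≤ T := by linarith [ht.1]
    simp only [hf]
    gcongr
  · have hs' : s ∈ Icc 0 T := ⟨(hnode hk.le).1.trans hs.1.le, hs.2.le.trans (hnode hk).2⟩
    obtain ⟨hAs, -, hQs, -⟩ := hfr k hk s (Ioo_subset_Ico_self hs)
    have hfκ : κ ≤ f s := by
      refine le_mul_of_one_le_right hκ0 (Real.one_le_exp (mul_nonneg hc0 ?_))
      linarith [hs'.2]
    rw [hAs, hQs]
    refine posSemidef_iff_quadForm.2 ⟨?_, fun x => ?_⟩
    · have hQt := (posSemidef_iff_quadForm.1 (h.posSemidef_Q _ (hnode hk.le) s hs')).1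
      simp only [Matrix.transpose_neg, Matrix.transpose_add, Matrix.transpose_smul,
        Matrix.transpose_one, Matrix.transpose_transpose, Matrix.smul_mul,
        Matrix.mul_smul, Matrix.one_mul, Matrix.mul_one, hQt]
      abel
    · have hA := (abs_le.1 (abs_quadForm_le x (A (tp k) s))).2
      have hQ := (abs_le.1 (abs_quadForm_le x (Q (tp k) s))).2
      have hx := dotProduct_self_nonneg' x
      have hA' : quadForm x (A (tp k) s) ≤ n * a * (x ⬝ᵥ x) := by
        refine hA.trans ?_
        have := ha _ (hnode hk.le) s hs'
        gcongr
      have hQ' : quadForm x (Q (tp k) s) ≤ n * q * (x ⬝ᵥ x) := by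
        refine hQ.trans ?_
        have := hq _ (hnode hk.le) s hs'
        gcongr
      have hn : n * q ≤ f s := (le_add_of_nonneg_right (by positivity)).trans hfκ
      simp only [Matrix.smul_mul, Matrix.mul_smul, Matrix.one_mul, Matrix.mul_one, map_neg,
        map_add, map_smul, smul_eq_mul, quadForm_one, quadForm_transpose]
      have h1 := mul_le_mul_of_nonneg_left hA' (hκ0.trans hfκ)
      have h2 := mul_le_mul_of_nonneg_right hn hx
      rw [hc]
      linarith
  · have hN : tp (N - 1) ∈ Icc 0 T := hnode (Nat.sub_le _ _)
    refine posSemidef_iff_quadForm.2 ⟨?_, fun x => ?_⟩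
    · simp only [Matrix.transpose_sub, Matrix.transpose_smul, Matrix.transpose_one,
        (posSemidef_iff_quadForm.1 (h.posSemidef_G _ hN)).1]
    · have hG := (abs_le.1 (abs_quadForm_le x (G (tp (N - 1))))).2
      have hx := dotProduct_self_nonneg' x
      have hG' : quadForm x (G (tp (N - 1))) ≤ n * γ * (x ⬝ᵥ x) := by
        refine hG.trans ?_
        have := hγ _ hN
        gcongr
      have hn : n * γ ≤ κ := le_add_of_nonneg_left (by positivity)
      have h2 := mul_le_mul_of_nonneg_right hn hx
      simp only [hf, sub_self, mul_zero, Real.exp_zero, mul_one, map_sub, map_smul, smul_eq_mul,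
        quadForm_one]
      linarith

end Riccati

end FrozenLQ

/-- under (H1)–(H2), for every partition `Δ` one has
`0 ≤ P^Δ(t) ≤ P̄₀^Δ(t)` on `[0,T]`, where `P̄₀^Δ` is the solution of the Lyapunov
equation `Ṗ + PA^Δ + (A^Δ)ᵀP + Q^Δ = 0` on `(0,T)` with `P(T) = G(t_{N−1})` (written
in integral form); consequently there is a constant `K > 0` independent of the
partition `Δ` with `‖P^Δ(t)‖ ≤ K` for all `t ∈ [0,T]` and all `Δ`. -/
theorem stmt_2 (n m : ℕ) (T L δ : ℝ) (hT : 0 < T) (hL : 0 < L) (hδ : 0 < δ)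
    (A : ℝ → ℝ → Matrix (Fin n) (Fin n) ℝ) (B : ℝ → ℝ → Matrix (Fin n) (Fin m) ℝ)
    (Q : ℝ → ℝ → Matrix (Fin n) (Fin n) ℝ) (R : ℝ → ℝ → Matrix (Fin m) (Fin m) ℝ)
    (G : ℝ → Matrix (Fin n) (Fin n) ℝ)
    -- (H1): continuity
    (hAc : ContinuousOn (fun p : ℝ × ℝ => A p.1 p.2) (Icc 0 T ×ˢ Icc 0 T))
    (hBc : ContinuousOn (fun p : ℝ × ℝ => B p.1 p.2) (Icc 0 T ×ˢ Icc 0 T))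
    (hQc : ContinuousOn (fun p : ℝ × ℝ => Q p.1 p.2) (Icc 0 T ×ˢ Icc 0 T))
    (hRc : ContinuousOn (fun p : ℝ × ℝ => R p.1 p.2) (Icc 0 T ×ˢ Icc 0 T))
    (hGc : ContinuousOn G (Icc 0 T))
    -- (H1): Lipschitz continuity in the first variable
    (hLip : ∀ t ∈ Icc (0:ℝ) T, ∀ r ∈ Icc (0:ℝ) T, ∀ s ∈ Icc (0:ℝ) T,
      ‖A t s - A r s‖ + ‖B t s - B r s‖ + ‖Q t s - Q r s‖ + ‖R t s - R r s‖
          + ‖G t - G r‖ ≤ L * |t - r|)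
    -- (H1): positivity
    (hQ : ∀ t ∈ Icc (0:ℝ) T, ∀ s ∈ Icc (0:ℝ) T, (Q t s).PosSemidef)
    (hG : ∀ t ∈ Icc (0:ℝ) T, (G t).PosSemidef)
    (hR : ∀ t ∈ Icc (0:ℝ) T, ∀ s ∈ Icc (0:ℝ) T,
      (R t s - δ • (1 : Matrix (Fin m) (Fin m) ℝ)).PosSemidef)
    -- (H2): monotonicity in the first variable
    (hGm : ∀ t r : ℝ, 0 ≤ t → t ≤ r → r ≤ T → (G r - G t).PosSemidef)
    (hQm : ∀ t r s : ℝ, 0 ≤ t → t ≤ r → r ≤ s → s ≤ T → (Q r s - Q t s).PosSemidef)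
    (hRm : ∀ t r s : ℝ, 0 ≤ t → t ≤ r → r ≤ s → s ≤ T → (R r s - R t s).PosSemidef)
    :
    (∀ (N : ℕ) (tp : ℕ → ℝ), IsPartition T N tp →
      ∀ (AΔ : ℝ → Matrix (Fin n) (Fin n) ℝ) (BΔ : ℝ → Matrix (Fin n) (Fin m) ℝ)
        (QΔ : ℝ → Matrix (Fin n) (Fin n) ℝ) (RΔ : ℝ → Matrix (Fin m) (Fin m) ℝ),
        IsFrozen n m N tp A B Q R AΔ BΔ QΔ RΔ →
      ∀ (PΔ : ℝ → Matrix (Fin n) (Fin n) ℝ) (Φ : ℕ → ℝ → Matrix (Fin n) (Fin n) ℝ),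
        IsPiecewiseRiccati n m N T tp Q R G AΔ BΔ QΔ RΔ PΔ Φ →
      ∀ Pbar0 : ℝ → Matrix (Fin n) (Fin n) ℝ,
        ContinuousOn Pbar0 (Icc 0 T) →
        (∀ s ∈ Icc (0:ℝ) T,
          Pbar0 s = G (tp (N - 1))
            + ∫ r in s..T, (Pbar0 r * AΔ r + (AΔ r)ᵀ * Pbar0 r + QΔ r)) →
        ∀ t ∈ Icc (0:ℝ) T, (PΔ t).PosSemidef ∧ (Pbar0 t - PΔ t).PosSemidef) ∧
    (∃ K > (0:ℝ), ∀ (N : ℕ) (tp : ℕ → ℝ), IsPartition T N tp →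
      ∀ (AΔ : ℝ → Matrix (Fin n) (Fin n) ℝ) (BΔ : ℝ → Matrix (Fin n) (Fin m) ℝ)
        (QΔ : ℝ → Matrix (Fin n) (Fin n) ℝ) (RΔ : ℝ → Matrix (Fin m) (Fin m) ℝ),
        IsFrozen n m N tp A B Q R AΔ BΔ QΔ RΔ →
      ∀ (PΔ : ℝ → Matrix (Fin n) (Fin n) ℝ) (Φ : ℕ → ℝ → Matrix (Fin n) (Fin n) ℝ),
        IsPiecewiseRiccati n m N T tp Q R G AΔ BΔ QΔ RΔ PΔ Φ →
      ∀ t ∈ Icc (0:ℝ) T, ‖PΔ t‖ ≤ K) := by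
  have hadm : FrozenLQ.IsAdmissible T δ A B Q R G :=
    ⟨hδ, hAc, hBc, hQc, hRc, hQ, hG, hR, hGm, hQm, hRm⟩
  refine ⟨fun N tp hp AΔ BΔ QΔ RΔ hfr PΔ Φ hP X hXc hX t ht => ⟨?_, ?_⟩, ?_⟩
  · exact (FrozenLQ.isPiecewiseLyapunov_of_isPiecewiseRiccati hadm hp hfr hP).posSemidef hp.1 t
      (by rwa [hp.2.1, hp.2.2.1])
  · have hpcX : FrozenLQ.PiecewiseContinuous 0 N tp X :=
      .of_continuousOn hp.2.2.2 (by rwa [hp.2.1, hp.2.2.1])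
    have hpcA := FrozenLQ.piecewiseContinuous_of_frozen hp hAc
      fun k hk s hs => (hfr k hk s hs).1
    have hpcQ := FrozenLQ.piecewiseContinuous_of_frozen hp hQc
      fun k hk s hs => (hfr k hk s hs).2.2.1
    refine FrozenLQ.posSemidef_sub_of_supersolution hadm hp hfr hP
      (X' := fun s => -(X s * AΔ s + (AΔ s)ᵀ * X s + QΔ s)) hXc
      (fun k hk s hs => FrozenLQ.hasDerivAt_of_backward_integral hp.2.2.2
        (((hpcX.matrix_mul hpcA).add (hpcA.matrix_transpose.matrix_mul hpcX)).add hpcQ)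
        (by rwa [hp.2.1, hp.2.2.1]) hk hs) (fun k hk s hs => ?_) ?_ t ht
    · have h0 : -(-(X s * AΔ s + (AΔ s)ᵀ * X s + QΔ s) + X s * AΔ s + (AΔ s)ᵀ * X s + QΔ s) =
          0 := by abel
      rw [h0]
      exact Matrix.PosSemidef.zero
    · rw [hX T (right_mem_Icc.2 hT.le), intervalIntegral.integral_same, add_zero, sub_self]
      exact Matrix.PosSemidef.zero
  · obtain ⟨a, ha⟩ := (isCompact_Icc.prod isCompact_Icc).exists_bound_of_continuousOn hAc
    obtain ⟨q, hq⟩ := (isCompact_Icc.prod isCompact_Icc).exists_bound_of_continuousOn hQc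
    obtain ⟨γ, hγ⟩ := isCompact_Icc.exists_bound_of_continuousOn hGc
    refine ⟨max 1 _, lt_max_of_lt_left one_pos, fun N tp hp AΔ BΔ QΔ RΔ hfr PΔ Φ hP t ht =>
      (FrozenLQ.norm_le_of_isPiecewiseRiccati hadm (fun t ht s hs => ha (t, s) ⟨ht, hs⟩)
        (fun t ht s hs => hq (t, s) ⟨ht, hs⟩) hγ hp hfr hP t ht).trans (le_max_right _ _)⟩
end

section
/- Let A:[0,T]→ℝ^{n×n}, B:[0,T]→ℝ^{n×m}, Q:[0,T]→𝒮ⁿ, R:[0,T]→𝒮ᵐ be continuous with Q(s) ≥ 0 and R(s) ≥ δI for all s and some δ>0, and let G ∈ 𝒮ⁿ with G ≥ 0. Then the Riccati differential equation Ṗ(s)+P(s)A(s)+A(s)ᵀP(s)+Q(s)−P(s)B(s)R(s)^{−1}B(s)ᵀP(s)=0 on [0,T] with terminal condition P(T)=G admits a unique continuously differentiable solution P:[0,T]→𝒮ⁿ defined on the whole interval [0,T] (no blow-up), and P(s) ≥ 0 for all s ∈ [0,T]. -/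
open Set Matrix

attribute [local instance] Matrix.normedAddCommGroup Matrix.normedSpace

section LinearODE

variable {E : Type*} [NormedAddCommGroup E] [NormedSpace ℝ E]

/-- The radial retraction onto a ball is bounded by the radius. -/
theorem norm_radial_le {N : ℝ} (hN : 0 < N) (x : E) : ‖(N / max N ‖x‖) • x‖ ≤ N := by
  have h : 0 < max N ‖x‖ := lt_max_of_lt_left hN
  rw [norm_smul, Real.norm_of_nonneg (by positivity), div_mul_eq_mul_div, div_le_iff₀ h]
  gcongr
  exact le_max_right _ _

theorem norm_radial_le_norm {N : ℝ} (hN : 0 < N) (x : E) :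
    ‖(N / max N ‖x‖) • x‖ ≤ ‖x‖ := by
  have h : 0 < max N ‖x‖ := lt_max_of_lt_left hN
  rw [norm_smul, Real.norm_of_nonneg (by positivity)]
  exact mul_le_of_le_one_left (norm_nonneg _) ((div_le_one h).2 (le_max_left _ _))

theorem radial_eq_self {N : ℝ} (hN : 0 < N) {x : E} (hx : ‖x‖ ≤ N) :
    (N / max N ‖x‖) • x = x := by
  rw [max_eq_left hx, div_self hN.ne', one_smul]

/-- The radial retraction onto a ball is Lipschitz. -/
theorem norm_radial_sub_le {N : ℝ} (hN : 0 < N) (x y : E) :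
    ‖(N / max N ‖x‖) • x - (N / max N ‖y‖) • y‖ ≤ 2 * ‖x - y‖ := by
  have hx : 0 < max N ‖x‖ := lt_max_of_lt_left hN
  have hy : 0 < max N ‖y‖ := lt_max_of_lt_left hN
  have e : (N / max N ‖x‖) • x - (N / max N ‖y‖) • y
      = (N / max N ‖x‖) • (x - y) + (N / max N ‖x‖ - N / max N ‖y‖) • y := by module
  have hm : |max N ‖y‖ - max N ‖x‖| ≤ ‖x - y‖ := by
    have h1 := abs_max_sub_max_le_abs ‖y‖ ‖x‖ N
    rw [max_comm N, max_comm N, norm_sub_rev]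
    exact h1.trans (abs_norm_sub_norm_le y x)
  have h1 : ‖(N / max N ‖x‖) • (x - y)‖ ≤ ‖x - y‖ := by
    rw [norm_smul, Real.norm_of_nonneg (by positivity)]
    exact mul_le_of_le_one_left (norm_nonneg _) ((div_le_one hx).2 (le_max_left _ _))
  have h2 : ‖(N / max N ‖x‖ - N / max N ‖y‖) • y‖ ≤ ‖x - y‖ := by
    have e2 : N / max N ‖x‖ - N / max N ‖y‖
        = (N / max N ‖x‖) * ((max N ‖y‖ - max N ‖x‖) / max N ‖y‖) := by
      field_simp
    rw [norm_smul, e2, norm_mul, Real.norm_of_nonneg (by positivity), norm_div,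
      Real.norm_of_nonneg hy.le, Real.norm_eq_abs, mul_assoc]
    refine (mul_le_of_le_one_left (by positivity)
      ((div_le_one hx).2 (le_max_left _ _))).trans ?_
    rw [div_mul_eq_mul_div, div_le_iff₀ hy]
    gcongr
    exact le_max_right _ _
  rw [e]
  linarith [norm_add_le ((N / max N ‖x‖) • (x - y)) ((N / max N ‖x‖ - N / max N ‖y‖) • y)]

theorem HasDerivWithinAt.Ici_of_Icc {z : ℝ → E} {z' : E} {a b s : ℝ}
    (h : HasDerivWithinAt z z' (Icc a b) s) (hs : s ∈ Ico a b) :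
    HasDerivWithinAt z z' (Ici s) s :=
  h.mono_of_mem_nhdsWithin (Icc_mem_nhdsGE_of_mem hs)

/-- A curve satisfying a homogeneous linear ODE that vanishes at the left endpoint vanishes. -/
theorem linearODE_eq_zero {M : ℝ → E →L[ℝ] E} {z : ℝ → E} {a b : ℝ}
    (hM : ContinuousOn M (Icc a b))
    (hz : ∀ s ∈ Icc a b, HasDerivWithinAt z (M s (z s)) (Icc a b) s) (ha : z a = 0) :
    ∀ s ∈ Icc a b, z s = 0 := by
  obtain ⟨K, hK⟩ := isCompact_Icc.exists_bound_of_continuousOn hM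
  refine eq_zero_of_abs_deriv_le_mul_abs_self_of_eq_zero_right (K := K)
    (fun s hs => (hz s hs).continuousWithinAt)
    (fun s hs => (hz s (Ico_subset_Icc_self hs)).Ici_of_Icc hs) ha fun s hs => ?_
  exact (M s).le_of_opNorm_le (hK s (Ico_subset_Icc_self hs)) _

/-- Global existence for homogeneous linear ODEs on a compact interval. -/
theorem exists_linearODE [CompleteSpace E] {M : ℝ → E →L[ℝ] E} {a b : ℝ} (hab : a ≤ b)
    (hM : ContinuousOn M (Icc a b)) (z₀ : E) :
    ∃ z : ℝ → E, z a = z₀ ∧ ∀ s ∈ Icc a b, HasDerivWithinAt z (M s (z s)) (Icc a b) s := by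
  obtain ⟨K, hK⟩ := isCompact_Icc.exists_bound_of_continuousOn hM
  have hK0 : 0 ≤ K := (norm_nonneg _).trans (hK a (left_mem_Icc.2 hab))
  set N : ℝ := (‖z₀‖ + 1) * Real.exp (K * (b - a)) with hNdef
  have hN : 0 < N := by positivity
  have hba : 0 ≤ b - a := sub_nonneg.2 hab
  have hPL : IsPicardLindelof (fun t z => M t ((N / max N ‖z‖) • z))
      (⟨a, left_mem_Icc.2 hab⟩ : Icc a b) z₀ (K * N * (b - a)).toNNReal 0
      (K * N).toNNReal (K * 2).toNNReal := by
    constructor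
    · intro t ht
      refine LipschitzWith.lipschitzOnWith (LipschitzWith.of_dist_le_mul fun x y => ?_)
      rw [dist_eq_norm, dist_eq_norm, ← map_sub, Real.coe_toNNReal _ (by positivity), mul_assoc]
      exact (M t).le_of_opNorm_le_of_le (hK t ht) (norm_radial_sub_le hN x y)
    · intro x _
      exact hM.clm_apply continuousOn_const
    · intro t ht x _
      rw [Real.coe_toNNReal _ (by positivity)]
      exact (M t).le_of_opNorm_le_of_le (hK t ht) (norm_radial_le hN x)
    · rw [Real.coe_toNNReal _ (by positivity), Real.coe_toNNReal _ (by positivity)]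
      simp [max_eq_left hba]
  obtain ⟨z, hz0, hz⟩ := hPL.exists_eq_forall_mem_Icc_hasDerivWithinAt₀
  refine ⟨z, hz0, fun s hs => ?_⟩
  have hb := norm_le_gronwallBound_of_norm_deriv_right_le (δ := ‖z₀‖) (K := K) (ε := 0)
    (fun s hs => (hz s hs).continuousWithinAt)
    (fun s hs => (hz s (Ico_subset_Icc_self hs)).Ici_of_Icc hs) (by rw [← hz0])
    (fun s hs => by
      rw [add_zero]
      exact (M s).le_of_opNorm_le_of_le (hK s (Ico_subset_Icc_self hs))
        (norm_radial_le_norm hN _)) s hs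
  rw [gronwallBound_ε0] at hb
  have hzN : ‖z s‖ ≤ N := by
    refine hb.trans ?_
    rw [hNdef]
    gcongr
    · linarith
    · exact hs.2
  have h := hz s hs
  rwa [radial_eq_self hN hzN] at h

theorem HasDerivWithinAt.reflect {z : ℝ → E} {z' : E} {a b s : ℝ}
    (h : HasDerivWithinAt z z' (Icc a b) (a + b - s)) :
    HasDerivWithinAt (fun t => z (a + b - t)) (-z') (Icc a b) s := by
  have h1 : HasDerivWithinAt (fun t : ℝ => a + b - t) (-1) (Icc a b) s :=
    ((hasDerivAt_id s).const_sub (a + b)).hasDerivWithinAt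
  have := h.scomp s h1 (fun t ht => ⟨by linarith [ht.2], by linarith [ht.1]⟩)
  simpa using! this

theorem reflect_mem_Icc {a b s : ℝ} (hs : s ∈ Icc a b) : a + b - s ∈ Icc a b :=
  ⟨by linarith [hs.2], by linarith [hs.1]⟩

theorem ContinuousOn.reflect_neg {F : Type*} [NormedAddCommGroup F] {M : ℝ → F} {a b : ℝ}
    (hM : ContinuousOn M (Icc a b)) : ContinuousOn (fun s => -M (a + b - s)) (Icc a b) :=
  (hM.comp (by fun_prop) fun _ hs => reflect_mem_Icc hs).neg

/-- Global existence for linear ODEs with prescribed value at the right endpoint. -/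
theorem exists_linearODE_terminal [CompleteSpace E] {M : ℝ → E →L[ℝ] E} {a b : ℝ}
    (hab : a ≤ b) (hM : ContinuousOn M (Icc a b)) (z₀ : E) :
    ∃ z : ℝ → E, z b = z₀ ∧ ∀ s ∈ Icc a b, HasDerivWithinAt z (M s (z s)) (Icc a b) s := by
  obtain ⟨z, hz0, hz⟩ := exists_linearODE hab hM.reflect_neg z₀
  refine ⟨fun s => z (a + b - s), by simpa using hz0, fun s hs => ?_⟩
  simpa using (hz _ (reflect_mem_Icc hs)).reflect

/-- A curve satisfying a homogeneous linear ODE that vanishes at the right endpoint vanishes. -/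
theorem linearODE_eq_zero_of_terminal {M : ℝ → E →L[ℝ] E} {z : ℝ → E} {a b : ℝ}
    (hM : ContinuousOn M (Icc a b))
    (hz : ∀ s ∈ Icc a b, HasDerivWithinAt z (M s (z s)) (Icc a b) s) (hb : z b = 0) :
    ∀ s ∈ Icc a b, z s = 0 := by
  have h := linearODE_eq_zero (z := fun s => z (a + b - s)) hM.reflect_neg
    (fun s hs => by simpa using (hz _ (reflect_mem_Icc hs)).reflect) (by simpa using hb)
  intro s hs
  simpa using h _ (reflect_mem_Icc hs)

end LinearODE

section MatrixCalculus

variable {l m n : Type*} [Fintype m]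

theorem hasDerivWithinAt_matrix [Fintype l] {X : ℝ → Matrix l m ℝ} {X' : Matrix l m ℝ} {u : Set ℝ}
    {s : ℝ} : HasDerivWithinAt X X' u s ↔
      ∀ i j, HasDerivWithinAt (fun t => X t i j) (X' i j) u s := by
  have h1 : HasDerivWithinAt X X' u s ↔ ∀ i, HasDerivWithinAt (fun t => X t i) (X' i) u s :=
    hasDerivWithinAt_pi (E' := fun _ : l => m → ℝ) (φ := X) (φ' := X')
  exact h1.trans (forall_congr' fun i => hasDerivWithinAt_pi)

variable [Fintype l] [Fintype n]

theorem HasDerivWithinAt.matrix_mul {X : ℝ → Matrix l m ℝ} {Y : ℝ → Matrix m n ℝ}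
    {X' : Matrix l m ℝ} {Y' : Matrix m n ℝ} {u : Set ℝ} {s : ℝ}
    (hX : HasDerivWithinAt X X' u s) (hY : HasDerivWithinAt Y Y' u s) :
    HasDerivWithinAt (fun t => X t * Y t) (X' * Y s + X s * Y') u s := by
  refine hasDerivWithinAt_matrix.2 fun i j => ?_
  have := HasDerivWithinAt.fun_sum (u := Finset.univ) fun k _ =>
    (hasDerivWithinAt_matrix.1 hX i k).fun_mul (hasDerivWithinAt_matrix.1 hY k j)
  simpa only [Matrix.mul_apply, Matrix.add_apply, Finset.sum_add_distrib] using this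

theorem HasDerivWithinAt.matrix_transpose {X : ℝ → Matrix l m ℝ}
    {X' : Matrix l m ℝ} {u : Set ℝ} {s : ℝ} (hX : HasDerivWithinAt X X' u s) :
    HasDerivWithinAt (fun t => (X t)ᵀ) X'ᵀ u s :=
  hasDerivWithinAt_matrix.2 fun i j => hasDerivWithinAt_matrix.1 hX j i

theorem HasDerivWithinAt.matrix_mulVec {X : ℝ → Matrix l m ℝ}
    {X' : Matrix l m ℝ} {u : Set ℝ} {s : ℝ} (hX : HasDerivWithinAt X X' u s) (v : m → ℝ) :
    HasDerivWithinAt (fun t => X t *ᵥ v) (X' *ᵥ v) u s := by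
  refine hasDerivWithinAt_pi.2 fun i => ?_
  simpa only [Matrix.mulVec, dotProduct] using HasDerivWithinAt.fun_sum (u := Finset.univ)
    fun k _ => (hasDerivWithinAt_matrix.1 hX i k).mul_const (v k)

theorem HasDerivWithinAt.const_dotProduct {x : ℝ → m → ℝ} {x' : m → ℝ} {u : Set ℝ} {s : ℝ}
    (hx : HasDerivWithinAt x x' u s) (v : m → ℝ) :
    HasDerivWithinAt (fun t => v ⬝ᵥ x t) (v ⬝ᵥ x') u s := by
  simpa [dotProduct] using! HasDerivWithinAt.fun_sum (u := Finset.univ)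
    fun k _ => (hasDerivWithinAt_pi.1 hx k).const_mul (v k)

theorem ContinuousOn.matrix_inv [DecidableEq m] {X : ℝ → Matrix m m ℝ} {u : Set ℝ}
    (hX : ContinuousOn X u) (hu : ∀ s ∈ u, IsUnit (X s).det) :
    ContinuousOn (fun s => (X s)⁻¹) u := by
  intro s hs
  refine ContinuousAt.comp_continuousWithinAt (g := Inv.inv)
    (continuousAt_matrix_inv _ ?_) (hX s hs)
  rw [Ring.inverse_eq_inv']
  exact continuousAt_inv₀ (hu s hs).ne_zero

theorem HasDerivWithinAt.matrix_inv [DecidableEq m] {X : ℝ → Matrix m m ℝ}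
    {X' : Matrix m m ℝ} {u : Set ℝ} {s : ℝ} (hX : HasDerivWithinAt X X' u s) (hs : s ∈ u)
    (hc : ContinuousOn X u) (hu : ∀ s ∈ u, IsUnit (X s).det) :
    HasDerivWithinAt (fun t => (X t)⁻¹) (-((X s)⁻¹ * X' * (X s)⁻¹)) u s := by
  have hX := hasDerivWithinAt_iff_tendsto_slope.1 hX
  refine hasDerivWithinAt_iff_tendsto_slope.2 ?_
  have h1 : Filter.Tendsto (fun t => (X t)⁻¹) (nhdsWithin s (u \ {s})) (nhds (X s)⁻¹) :=
    ((hc.matrix_inv hu) s hs).mono sdiff_subset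
  have h2 : Filter.Tendsto (fun t => -((X t)⁻¹ * slope X s t * (X s)⁻¹))
      (nhdsWithin s (u \ {s})) (nhds (-((X s)⁻¹ * X' * (X s)⁻¹))) :=
    ((h1.mul hX).mul_const _).neg
  refine h2.congr' ?_
  filter_upwards [self_mem_nhdsWithin] with t ht
  have e1 := Matrix.nonsing_inv_mul _ (hu t ht.1)
  have e2 := Matrix.mul_nonsing_inv _ (hu s hs)
  simp only [slope_def_module, Matrix.mul_smul, Matrix.smul_mul, ← smul_neg]
  congr 1
  rw [Matrix.mul_sub, Matrix.sub_mul, e1, Matrix.one_mul, Matrix.mul_assoc, e2, Matrix.mul_one,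
    neg_sub]

end MatrixCalculus

section Riccati

variable {n : Type*} [Fintype n]

/-- The Hamiltonian vector field `(X, Y) ↦ (AX - SY, -QX - AᵀY)` of a Riccati equation. -/
def hamiltonianMap (A S Q : Matrix n n ℝ) :
    (Matrix n n ℝ × Matrix n n ℝ) →ₗ[ℝ] (Matrix n n ℝ × Matrix n n ℝ) where
  toFun z := (A * z.1 - S * z.2, -(Q * z.1) - Aᵀ * z.2)
  map_add' x y := by
    ext1 <;> simp only [Prod.fst_add, Prod.snd_add, Matrix.mul_add] <;> abel
  map_smul' c x := by
    ext1 <;> simp [smul_sub]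

/-- The map `D ↦ -(D U + V D)`. -/
def sylvesterMap (U V : Matrix n n ℝ) : Matrix n n ℝ →ₗ[ℝ] Matrix n n ℝ where
  toFun D := -(D * U + V * D)
  map_add' x y := by simp only [Matrix.mul_add, Matrix.add_mul]; abel
  map_smul' c x := by simp

variable [DecidableEq n] {A S Q : ℝ → Matrix n n ℝ} {T : ℝ}

theorem exists_hamiltonian_terminal (hT : 0 ≤ T)
    (hA : ContinuousOn A (Icc 0 T)) (hS : ContinuousOn S (Icc 0 T))
    (hQ : ContinuousOn Q (Icc 0 T)) (G : Matrix n n ℝ) :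
    ∃ X Y : ℝ → Matrix n n ℝ, X T = 1 ∧ Y T = G ∧
      (∀ s ∈ Icc 0 T, HasDerivWithinAt X (A s * X s - S s * Y s) (Icc 0 T) s) ∧
      (∀ s ∈ Icc 0 T, HasDerivWithinAt Y (-(Q s * X s) - (A s)ᵀ * Y s) (Icc 0 T) s) := by
  have hM : ContinuousOn
      (fun s => LinearMap.toContinuousLinearMap (hamiltonianMap (A s) (S s) (Q s)))
      (Icc 0 T) := by
    refine continuousOn_clm_apply.2 fun z => ?_
    exact ((hA.mul continuousOn_const).sub (hS.mul continuousOn_const)).prodMk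
      ((hQ.mul continuousOn_const).neg.sub
        (ContinuousOn.mul (continuous_id.matrix_transpose.comp_continuousOn hA)
          continuousOn_const))
  obtain ⟨z, hz0, hz⟩ := exists_linearODE_terminal hT hM (1, G)
  exact ⟨fun s => (z s).1, fun s => (z s).2, by simp [hz0], by simp [hz0],
    fun s hs => (hz s hs).fst, fun s hs => (hz s hs).snd⟩

/-- Two solutions of a matrix Riccati equation with equal terminal values coincide. -/
theorem riccati_unique {P P' : ℝ → Matrix n n ℝ}
    (hA : ContinuousOn A (Icc 0 T)) (hS : ContinuousOn S (Icc 0 T))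
    (hP : ∀ s ∈ Icc 0 T, HasDerivWithinAt P
      (-(P s * A s + (A s)ᵀ * P s + Q s - P s * S s * P s)) (Icc 0 T) s)
    (hP' : ∀ s ∈ Icc 0 T, HasDerivWithinAt P'
      (-(P' s * A s + (A s)ᵀ * P' s + Q s - P' s * S s * P' s)) (Icc 0 T) s)
    (h : P' T = P T) : EqOn P' P (Icc 0 T) := by
  have cP : ContinuousOn P (Icc 0 T) := fun s hs => (hP s hs).continuousWithinAt
  have cP' : ContinuousOn P' (Icc 0 T) := fun s hs => (hP' s hs).continuousWithinAt
  have hM : ContinuousOn (fun s => LinearMap.toContinuousLinearMap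
      (sylvesterMap (A s - S s * P s) ((A s)ᵀ - P' s * S s))) (Icc 0 T) := by
    refine continuousOn_clm_apply.2 fun D => ?_
    exact ((continuousOn_const.mul (hA.sub (hS.mul cP))).add
      (((continuous_id.matrix_transpose.comp_continuousOn hA).sub (cP'.mul hS)).mul
        continuousOn_const)).neg
  have key := linearODE_eq_zero_of_terminal (z := fun s => P' s - P s) hM (fun s hs => by
    convert! (hP' s hs).sub (hP s hs) using 1
    change -((P' s - P s) * (A s - S s * P s) + ((A s)ᵀ - P' s * S s) * (P' s - P s)) = _
    noncomm_ring) (by simp [h])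
  exact fun s hs => sub_eq_zero.1 (key s hs)

section Hamiltonian

variable {X Y : ℝ → Matrix n n ℝ}
  (hX : ∀ s ∈ Icc 0 T, HasDerivWithinAt X (A s * X s - S s * Y s) (Icc 0 T) s)
  (hY : ∀ s ∈ Icc 0 T, HasDerivWithinAt Y (-(Q s * X s) - (A s)ᵀ * Y s) (Icc 0 T) s)
  (hS : ∀ s ∈ Icc 0 T, (S s).PosSemidef) (hQ : ∀ s ∈ Icc 0 T, (Q s).PosSemidef)

include hX hY hS

theorem hamiltonian_hasDerivWithinAt_transpose_mul {s : ℝ} (hs : s ∈ Icc 0 T) :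
    HasDerivWithinAt (fun t => (X t)ᵀ * Y t)
      (-((Y s)ᵀ * S s * Y s + (X s)ᵀ * Q s * X s)) (Icc 0 T) s := by
  have hSs : (S s)ᵀ = S s := by simpa using (hS s hs).isHermitian.eq
  convert! (hX s hs).matrix_transpose.matrix_mul (hY s hs) using 1
  rw [transpose_sub, transpose_mul, transpose_mul, hSs]
  noncomm_ring

include hQ

theorem hamiltonian_isSymm_transpose_mul (hT : ((X T)ᵀ * Y T).IsSymm) {s : ℝ}
    (hs : s ∈ Icc 0 T) : ((X s)ᵀ * Y s).IsSymm := by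
  have h := linearODE_eq_zero_of_terminal (M := fun _ => 0) (a := 0) (b := T)
    (z := fun t => ((X t)ᵀ * Y t)ᵀ - (X t)ᵀ * Y t) continuousOn_const (fun s hs => by
      have hSs : (S s)ᵀ = S s := by simpa using (hS s hs).isHermitian.eq
      have hQs : (Q s)ᵀ = Q s := by simpa using (hQ s hs).isHermitian.eq
      have hF := hamiltonian_hasDerivWithinAt_transpose_mul hX hY hS hs
      convert! hF.matrix_transpose.sub hF using 1
      simp [Matrix.transpose_mul, hSs, hQs, Matrix.mul_assoc]) (sub_eq_zero.2 hT)
  exact sub_eq_zero.1 (h s hs)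

theorem hamiltonian_antitoneOn (v : n → ℝ) :
    AntitoneOn (fun t => v ⬝ᵥ ((X t)ᵀ * Y t) *ᵥ v) (Icc 0 T) := by
  have hd := fun (s : ℝ) (hs : s ∈ Icc 0 T) =>
    ((hamiltonian_hasDerivWithinAt_transpose_mul hX hY hS hs).matrix_mulVec v).const_dotProduct v
  refine antitoneOn_of_hasDerivWithinAt_nonpos (convex_Icc 0 T)
    (fun s hs => (hd s hs).continuousWithinAt)
    (fun s hs => (hd s (interior_subset hs)).mono interior_subset) fun s hs => ?_
  have hs := interior_subset hs
  have h1 := ((hS s hs).conjTranspose_mul_mul_same (Y s)).add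
    ((hQ s hs).conjTranspose_mul_mul_same (X s))
  rw [neg_mulVec, dotProduct_neg, neg_nonpos]
  simpa using h1.dotProduct_mulVec_nonneg v

theorem hamiltonian_posSemidef_transpose_mul (hT : ((X T)ᵀ * Y T).PosSemidef) {s : ℝ}
    (hs : s ∈ Icc 0 T) : ((X s)ᵀ * Y s).PosSemidef := by
  have hsymm := hamiltonian_isSymm_transpose_mul hX hY hS hQ
    (isHermitian_iff_isSymm.1 hT.isHermitian) hs
  refine .of_dotProduct_mulVec_nonneg (isHermitian_iff_isSymm.2 hsymm) fun v => ?_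
  have h := hamiltonian_antitoneOn hX hY hS hQ v hs
    (right_mem_Icc.2 (hs.1.trans hs.2)) hs.2
  exact (hT.dotProduct_mulVec_nonneg v).trans (by simpa using h)

/-- The first component of the Hamiltonian flow started at `X(T) = 1` stays invertible. -/
theorem hamiltonian_isUnit_det (hA : ContinuousOn A (Icc 0 T)) (hXT : X T = 1)
    (hT : ((X T)ᵀ * Y T).PosSemidef) {t : ℝ} (ht : t ∈ Icc 0 T) : IsUnit (X t).det := by
  rw [← isUnit_iff_isUnit_det, ← mulVec_injective_iff_isUnit]
  refine (injective_iff_map_eq_zero (X t).mulVecLin).2 fun v hv => ?_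
  replace hv : X t *ᵥ v = 0 := hv
  rcases ht.2.eq_or_lt with rfl | htT
  · simpa [hXT] using hv
  have hsub : Icc t T ⊆ Icc 0 T := Icc_subset_Icc_left ht.1
  have hTm : T ∈ Icc 0 T := right_mem_Icc.2 (ht.1.trans ht.2)
  have hw : ∀ s ∈ Icc t T, v ⬝ᵥ ((X s)ᵀ * Y s) *ᵥ v = 0 := by
    intro s hs
    refine le_antisymm ?_ ?_
    · have h := hamiltonian_antitoneOn hX hY hS hQ v ht (hsub hs) hs.1
      have h0 : v ⬝ᵥ ((X t)ᵀ * Y t) *ᵥ v = 0 := by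
        rw [← mulVec_mulVec, dotProduct_mulVec, vecMul_transpose, hv, zero_dotProduct]
      exact h.trans h0.le
    · simpa using (hamiltonian_posSemidef_transpose_mul hX hY hS hQ hT
        (hsub hs)).dotProduct_mulVec_nonneg v
  have hSY : ∀ s ∈ Icc t T, S s *ᵥ (Y s *ᵥ v) = 0 := by
    intro s hs
    have hd := (((hamiltonian_hasDerivWithinAt_transpose_mul hX hY hS
      (hsub hs)).matrix_mulVec v).const_dotProduct v).mono hsub
    have h0 : HasDerivWithinAt (fun s => v ⬝ᵥ ((X s)ᵀ * Y s) *ᵥ v) 0 (Icc t T) s :=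
      (hasDerivWithinAt_const s _ (0 : ℝ)).congr hw (hw s hs)
    have he := (uniqueDiffOn_Icc htT s hs).eq_deriv _ hd h0
    have h1 := ((hS s (hsub hs)).conjTranspose_mul_mul_same (Y s)).dotProduct_mulVec_nonneg v
    have h2 := ((hQ s (hsub hs)).conjTranspose_mul_mul_same (X s)).dotProduct_mulVec_nonneg v
    rw [neg_mulVec, dotProduct_neg, add_mulVec, dotProduct_add] at he
    simp only [star_trivial, conjTranspose_eq_transpose_of_trivial] at h1 h2
    have h3 : v ⬝ᵥ ((Y s)ᵀ * S s * Y s) *ᵥ v = 0 := by linarith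
    refine ((hS s (hsub hs)).dotProduct_mulVec_zero_iff _).1 ?_
    rwa [Matrix.mul_assoc, ← mulVec_mulVec, dotProduct_mulVec, vecMul_transpose,
      ← mulVec_mulVec] at h3
  have hM : ContinuousOn (fun s => LinearMap.toContinuousLinearMap (A s).mulVecLin)
      (Icc t T) := by
    refine continuousOn_clm_apply.2 fun x => ?_
    exact (continuous_id.matrix_mulVec continuous_const).comp_continuousOn (hA.mono hsub)
  have h := linearODE_eq_zero (z := fun s => X s *ᵥ v) hM (fun s hs => by
    convert! ((hX s (hsub hs)).matrix_mulVec v).mono hsub using 1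
    rw [sub_mulVec, ← mulVec_mulVec, ← mulVec_mulVec, hSY s hs, sub_zero]
    rfl) hv T (right_mem_Icc.2 ht.2)
  simpa [hXT] using h

end Hamiltonian

/-- Global existence for the matrix Riccati equation with positive semidefinite data. -/
theorem exists_riccati (hT : 0 ≤ T)
    (hA : ContinuousOn A (Icc 0 T)) (hSc : ContinuousOn S (Icc 0 T))
    (hQc : ContinuousOn Q (Icc 0 T)) (hS : ∀ s ∈ Icc 0 T, (S s).PosSemidef)
    (hQ : ∀ s ∈ Icc 0 T, (Q s).PosSemidef) {G : Matrix n n ℝ} (hG : G.PosSemidef) :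
    ∃ P : ℝ → Matrix n n ℝ,
      (∀ s ∈ Icc 0 T, HasDerivWithinAt P
        (-(P s * A s + (A s)ᵀ * P s + Q s - P s * S s * P s)) (Icc 0 T) s) ∧
      P T = G ∧ ∀ s ∈ Icc 0 T, (P s).PosSemidef := by
  obtain ⟨X, Y, hXT, hYT, hX, hY⟩ := exists_hamiltonian_terminal hT hA hSc hQc G
  have hF : ((X T)ᵀ * Y T).PosSemidef := by simpa [hXT, hYT] using hG
  have hu : ∀ s ∈ Icc 0 T, IsUnit (X s).det := fun s hs =>
    hamiltonian_isUnit_det hX hY hS hQ hA hXT hF hs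
  refine ⟨fun s => Y s * (X s)⁻¹, fun s hs => ?_, by simp [hXT, hYT], fun s hs => ?_⟩
  · have hXc : ContinuousOn X (Icc 0 T) := fun s hs => (hX s hs).continuousWithinAt
    convert! (hY s hs).matrix_mul ((hX s hs).matrix_inv hs hXc hu) using 1
    have e : X s * (X s)⁻¹ = 1 := Matrix.mul_nonsing_inv _ (hu s hs)
    have e1 : (-(Q s * X s) - (A s)ᵀ * Y s) * (X s)⁻¹ = -Q s - (A s)ᵀ * (Y s * (X s)⁻¹) := by
      rw [Matrix.sub_mul, Matrix.neg_mul, Matrix.mul_assoc, e, Matrix.mul_one, Matrix.mul_assoc]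
    have e2 : (A s * X s - S s * Y s) * (X s)⁻¹ = A s - S s * (Y s * (X s)⁻¹) := by
      rw [Matrix.sub_mul, Matrix.mul_assoc, e, Matrix.mul_one, Matrix.mul_assoc]
    rw [e1, Matrix.mul_assoc (X s)⁻¹, e2]
    noncomm_ring
  · have h := (hamiltonian_posSemidef_transpose_mul hX hY hS hQ hF
      hs).conjTranspose_mul_mul_same (X s)⁻¹
    have e : (X s)ᴴ⁻¹ * (X s)ᴴ = 1 := by
      rw [← conjTranspose_nonsing_inv, ← conjTranspose_mul, Matrix.mul_nonsing_inv _ (hu s hs),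
        conjTranspose_one]
    rwa [conjTranspose_nonsing_inv, ← conjTranspose_eq_transpose_of_trivial, ← Matrix.mul_assoc,
      e, Matrix.one_mul] at h

end Riccati

/-- global existence, uniqueness and positive semidefiniteness of the
solution of the matrix Riccati terminal value problem
`Ṗ + PA + AᵀP + Q − PBR⁻¹BᵀP = 0` on `[0,T]`, `P(T) = G`, under `Q(s) ≥ 0`,
`R(s) ≥ δI` (`δ > 0`) and `G ≥ 0` (no blow-up on `[0,T]`). -/
theorem stmt_6 (n m : ℕ) (T δ : ℝ) (hT : 0 < T) (hδ : 0 < δ)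
    (A : ℝ → Matrix (Fin n) (Fin n) ℝ) (B : ℝ → Matrix (Fin n) (Fin m) ℝ)
    (Q : ℝ → Matrix (Fin n) (Fin n) ℝ) (R : ℝ → Matrix (Fin m) (Fin m) ℝ)
    (G : Matrix (Fin n) (Fin n) ℝ)
    (hA : ContinuousOn A (Icc 0 T)) (hB : ContinuousOn B (Icc 0 T))
    (hQc : ContinuousOn Q (Icc 0 T)) (hRc : ContinuousOn R (Icc 0 T))
    (hQ : ∀ s ∈ Icc (0:ℝ) T, (Q s).PosSemidef)
    (hR : ∀ s ∈ Icc (0:ℝ) T, (R s - δ • (1 : Matrix (Fin m) (Fin m) ℝ)).PosSemidef)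
    (hG : G.PosSemidef) :
    ∃ P : ℝ → Matrix (Fin n) (Fin n) ℝ,
      (∀ s ∈ Icc (0:ℝ) T,
        HasDerivWithinAt P
          (-(P s * A s + (A s)ᵀ * P s + Q s - P s * B s * (R s)⁻¹ * (B s)ᵀ * P s))
          (Icc 0 T) s) ∧
      P T = G ∧
      (∀ s ∈ Icc (0:ℝ) T, (P s).IsSymm ∧ (P s).PosSemidef) ∧
      (∀ P' : ℝ → Matrix (Fin n) (Fin n) ℝ,
        (∀ s ∈ Icc (0:ℝ) T,
          HasDerivWithinAt P'
            (-(P' s * A s + (A s)ᵀ * P' s + Q s - P' s * B s * (R s)⁻¹ * (B s)ᵀ * P' s))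
            (Icc 0 T) s) →
        P' T = G → EqOn P' P (Icc 0 T)) := by
  have hRpd : ∀ s ∈ Icc (0:ℝ) T, (R s).PosDef := fun s hs => by
    simpa using PosDef.posSemidef_add (hR s hs) (PosDef.one.smul hδ)
  have hRinv : ContinuousOn (fun s => (R s)⁻¹) (Icc 0 T) :=
    hRc.matrix_inv fun s hs => (isUnit_iff_isUnit_det _).1 (hRpd s hs).isUnit
  have hSc : ContinuousOn (fun s => B s * (R s)⁻¹ * (B s)ᵀ) (Icc 0 T) := by
    have h1 : Continuous fun p : Matrix (Fin n) (Fin m) ℝ × Matrix (Fin m) (Fin m) ℝ =>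
        p.1 * p.2 * p.1ᵀ :=
      (continuous_fst.matrix_mul continuous_snd).matrix_mul continuous_fst.matrix_transpose
    exact h1.comp_continuousOn (f := fun s => (B s, (R s)⁻¹)) (hB.prodMk hRinv)
  have hS : ∀ s ∈ Icc (0:ℝ) T, (B s * (R s)⁻¹ * (B s)ᵀ).PosSemidef := fun s hs => by
    simpa using (hRpd s hs).inv.posSemidef.mul_mul_conjTranspose_same (B s)
  obtain ⟨P, hP, hPT, hpos⟩ := exists_riccati hT.le hA hSc hQc hS hQ hG
  refine ⟨P, fun s hs => ?_, hPT, fun s hs => ⟨?_, hpos s hs⟩, fun P' hP' hP'T => ?_⟩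
  · simpa only [Matrix.mul_assoc] using hP s hs
  · exact isHermitian_iff_isSymm.1 (hpos s hs).isHermitian
  · refine riccati_unique hA hSc hP (fun s hs => ?_) (hP'T.trans hPT.symm)
    simpa only [Matrix.mul_assoc] using hP' s hs
end
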